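/- Let r ≥ 4 and let H be an r-graph that is embeddable in a 2-reducible r-tree and has a cross-cut; let σ = σ(H) and β = 1/((r−2)(σ+1)+1). If σ ≥ 2, then there is a constant C > 0 (depending only on r and the number of vertices of H) such that for all n, ex(n,H) ≤ (σ−1)·binom(n,r−1) + C·n^{r−1−β}. If σ = 1, then there is a constant C > 0 (depending only on r and the number of vertices of H) such that for all n, ex(n,H) ≤ C·n^{r−2}. -/

import Mathlib

open Finset
open scoped Classical

noncomputable section

variable {α β : Type*}

/-- The vertex set of a hypergraph given by its finite edge set. -/
def hverts [DecidableEq α] (H : Finset (Finset α)) : Finset α := H.sup id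

/-- `E 0, E 1, …, E (m-1)` is a tree-defining ordering: every edge after the first
has a parent among the earlier edges containing its intersection with the union of
all earlier edges. -/
def IsTreeOrder {m : ℕ} [DecidableEq α] (E : Fin m → Finset α) : Prop :=
  ∀ i : Fin m, 0 < i.1 → ∃ j : Fin m, j < i ∧ E i ∩ (Finset.Iio i).sup E ⊆ E j

/-- A tight tree-defining ordering for an `r`-uniform hypergraph. -/
def IsTightTreeOrder {m : ℕ} [DecidableEq α] (r : ℕ) (E : Fin m → Finset α) : Prop :=
  ∀ i : Fin m, 0 < i.1 → ∃ j : Fin m, j < i ∧ E i ∩ (Finset.Iio i).sup E ⊆ E j ∧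
    (E i ∩ E j).card = r - 1

/-- `H` is an `r`-tree: its edges admit a tree-defining ordering (with multiplicities
allowed in the ordering), and all edges have `r` vertices. -/
def IsRTree [DecidableEq α] (r : ℕ) (H : Finset (Finset α)) : Prop :=
  ∃ (m : ℕ) (E : Fin m → Finset α),
    H = Finset.image E Finset.univ ∧ IsTreeOrder E ∧ ∀ i, (E i).card = r

/-- `H` is a tight `r`-tree. -/
def IsTightRTree [DecidableEq α] (r : ℕ) (H : Finset (Finset α)) : Prop :=
  ∃ (m : ℕ) (E : Fin m → Finset α),
    H = Finset.image E Finset.univ ∧ IsTightTreeOrder r E ∧ ∀ i, (E i).card = r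

/-- The degree of a vertex: the number of edges containing it. -/
def hdeg [DecidableEq α] (H : Finset (Finset α)) (x : α) : ℕ :=
  (H.filter (fun E => x ∈ E)).card

/-- `H` is `k`-reducible: every edge contains at least `k` vertices of degree 1. -/
def Reducible [DecidableEq α] (k : ℕ) (H : Finset (Finset α)) : Prop :=
  ∀ E ∈ H, k ≤ (E.filter (fun x => hdeg H x = 1)).card

/-- `S` is a cross-cut of `H`: it meets every edge in exactly one vertex. -/
def IsCrossCut [DecidableEq α] (H : Finset (Finset α)) (S : Finset α) : Prop :=
  ∀ E ∈ H, (E ∩ S).card = 1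

/-- The cross-cut number: minimum size of a cross-cut. -/
def crossCutNum [DecidableEq α] (H : Finset (Finset α)) : ℕ :=
  sInf {k | ∃ S : Finset α, IsCrossCut H S ∧ S.card = k}

/-- `S` is a vertex cover of `H`. -/
def IsVertexCover [DecidableEq α] (H : Finset (Finset α)) (S : Finset α) : Prop :=
  ∀ E ∈ H, (E ∩ S).Nonempty

/-- The vertex cover number: minimum size of a vertex cover. -/
def coverNum [DecidableEq α] (H : Finset (Finset α)) : ℕ :=
  sInf {k | ∃ S : Finset α, IsVertexCover H S ∧ S.card = k}

/-- `G` contains a copy of `H`, i.e. `H` is embeddable in `G`. -/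
def ContainsCopy [DecidableEq α] [DecidableEq β] (G : Finset (Finset β))
    (H : Finset (Finset α)) : Prop :=
  ∃ f : α → β, Set.InjOn f ↑(H.sup id) ∧ ∀ E ∈ H, E.image f ∈ G

/-- The Turán number `ex(n, H)`: the maximum size of an `r`-uniform family on `[n]`
containing no copy of `H`. -/
def exNum [DecidableEq α] (n r : ℕ) (H : Finset (Finset α)) : ℕ :=
  sSup {N | ∃ F : Finset (Finset (Fin n)), (∀ E ∈ F, E.card = r) ∧
    ¬ ContainsCopy F H ∧ F.card = N}

/-!
An `r`-uniform family contains a *homogeneous* subfamily of constant proportion (Füredi): the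
vertices carry `r` colours, every edge has one vertex of each colour, and the colour sets of
pairwise intersections lie in a collection `J`, each member of which marks a rich kernel in every
edge. If the colour sets avoiding two fixed colours all lie in `J`, then every `2`-reducible
`r`-tree embeds greedily, the two private vertices of an edge taking these colours. Otherwise the
subfamily has at most `n ^ (r - 2)` edges, or it has a star centre: a colour `c` such that `J`
contains all proper colour sets through `c` and only small ones avoiding it. Subhypergraphs of an
`r`-tree whose edges share a vertex, hence those with a one-vertex cross-cut, embed in a family
with a star centre.

For a cross-cut of size `σ`, separate the vertices of large degree. They are few, and any `σ` of
them have a small common link: a large one would contain the edges of `H` without their cross-cut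
vertices. So, up to an error term, at most `(σ - 1) * n.choose (r - 1)` edges meet them. In the
rest of the family all links are small, which by Kruskal–Katona makes their double shadows
relatively large; as the links of the star centres have disjoint double shadows, there are few
edges left.
-/

/-! ### Homogeneous subfamilies -/

section Homogeneous

variable {V κ : Type*}

/-- Every set `U` of at most `s` vertices is avoided, outside `B`, by a member of `F` containing
`B`. This plays the role of `B` being the kernel of a large sunflower in `F`. -/
def IsRichKernel [DecidableEq V] (s : ℕ) (F : Finset (Finset V)) (B : Finset V) : Prop :=
  ∀ U : Finset V, #U ≤ s → ∃ E ∈ F, B ⊆ E ∧ Disjoint (E \ B) U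

/-- `F` is a partite family whose parts are the colour classes of `χ`: every member has exactly
one vertex of each colour. -/
def IsRainbow (F : Finset (Finset V)) (χ : V → κ) : Prop :=
  ∀ E ∈ F, Set.BijOn χ E Set.univ

/-- The part of `E` with colours in `K`. -/
def colorPart [DecidableEq κ] (χ : V → κ) (K : Finset κ) (E : Finset V) : Finset V :=
  {x ∈ E | χ x ∈ K}

lemma IsRichKernel.mono [DecidableEq V] {s : ℕ} {F G : Finset (Finset V)} {B : Finset V}
    (h : IsRichKernel s F B) (hFG : F ⊆ G) : IsRichKernel s G B := fun U hU =>
  let ⟨E, hE, hBE⟩ := h U hU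
  ⟨E, hFG hE, hBE⟩

lemma exists_card_le_mul_card_insert [DecidableEq V] {s : ℕ} {F : Finset (Finset V)}
    {B : Finset V} (hB : ¬ IsRichKernel s F B) (hne : {E ∈ F | B ⊆ E}.Nonempty) :
    ∃ u ∉ B, #{E ∈ F | B ⊆ E} ≤ s * #{E ∈ F | insert u B ⊆ E} := by
  simp only [IsRichKernel, not_forall, not_exists, not_and] at hB
  obtain ⟨U, hU, hmeet⟩ := hB
  have hcover : {E ∈ F | B ⊆ E} ⊆ (U \ B).biUnion fun u => {E ∈ F | insert u B ⊆ E} := by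
    intro E hE
    obtain ⟨hEF, hBE⟩ := mem_filter.1 hE
    obtain ⟨u, huE, huU⟩ := not_disjoint_iff.1 (hmeet E hEF hBE)
    rw [mem_sdiff] at huE
    exact mem_biUnion.2 ⟨u, mem_sdiff.2 ⟨huU, huE.2⟩,
      mem_filter.2 ⟨hEF, insert_subset huE.1 hBE⟩⟩
  obtain ⟨u, hu, hmax⟩ := (U \ B).exists_max_image (fun u => #{E ∈ F | insert u B ⊆ E})
    (biUnion_nonempty.1 (hne.mono hcover) |>.imp fun _ h => h.1)
  refine ⟨u, (mem_sdiff.1 hu).2, ?_⟩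
  calc #{E ∈ F | B ⊆ E} ≤ #(U \ B) * #{E ∈ F | insert u B ⊆ E} :=
        (card_le_card hcover).trans (card_biUnion_le_card_mul _ _ _ hmax)
    _ ≤ s * #{E ∈ F | insert u B ⊆ E} := by
        gcongr
        exact (card_le_card sdiff_subset).trans hU

section ColorPart

variable [DecidableEq κ] {χ : V → κ} {K : Finset κ} {E : Finset V}

lemma mem_colorPart {x : V} : x ∈ colorPart χ K E ↔ x ∈ E ∧ χ x ∈ K := mem_filter

lemma colorPart_subset : colorPart χ K E ⊆ E := filter_subset _ _

end ColorPart

namespace IsRainbow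

variable {F G : Finset (Finset V)} {χ : V → κ} {E E' : Finset V}

lemma mono (h : IsRainbow G χ) (hFG : F ⊆ G) : IsRainbow F χ := fun E hE => h E (hFG hE)

lemma exists_color (h : IsRainbow F χ) (hE : E ∈ F) (c : κ) : ∃ x ∈ E, χ x = c :=
  (h E hE).surjOn (Set.mem_univ c)

lemma card_eq [Fintype κ] (h : IsRainbow F χ) (hE : E ∈ F) : #E = Fintype.card κ :=
  card_nbij χ (fun _ _ => mem_univ _) (h E hE).injOn (by simpa using (h E hE).surjOn)

variable [DecidableEq κ]

lemma image_colorPart (h : IsRainbow F χ) (hE : E ∈ F) (K : Finset κ) :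
    (colorPart χ K E).image χ = K := by
  ext c
  simp only [mem_image, mem_colorPart]
  constructor
  · rintro ⟨x, ⟨-, hx⟩, rfl⟩
    exact hx
  · intro hc
    obtain ⟨x, hx, rfl⟩ := h.exists_color hE c
    exact ⟨x, ⟨hx, hc⟩, rfl⟩

lemma card_colorPart (h : IsRainbow F χ) (hE : E ∈ F) (K : Finset κ) :
    #(colorPart χ K E) = #K := by
  conv_rhs => rw [← h.image_colorPart hE K]
  exact (card_image_of_injOn ((h E hE).injOn.mono (coe_subset.2 colorPart_subset))).symm

lemma colorPart_image (h : IsRainbow F χ) (hE : E ∈ F) {B : Finset V} (hB : B ⊆ E) :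
    colorPart χ (B.image χ) E = B := by
  ext x
  simp only [mem_colorPart, mem_image]
  constructor
  · rintro ⟨hx, y, hy, hyx⟩
    rwa [← (h E hE).injOn (hB hy) hx hyx]
  · exact fun hx => ⟨hB hx, x, hx, rfl⟩

lemma image_eq_univ [Fintype κ] (h : IsRainbow F χ) (hE : E ∈ F) : E.image χ = univ := by
  simpa [colorPart] using h.image_colorPart hE univ

lemma colorPart_eq_of_subset (h : IsRainbow F χ) (hE : E ∈ F) (hE' : E' ∈ F) {K : Finset κ}
    (hsub : colorPart χ K E ⊆ E') : colorPart χ K E' = colorPart χ K E := by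
  simpa only [h.image_colorPart hE] using h.colorPart_image hE' hsub

variable [DecidableEq V]

lemma image_inter_ne (h : IsRainbow F χ) {E₀ : Finset V} (hE₀ : E₀ ∈ F) {K : Finset κ} {u : V}
    (hu : u ∉ colorPart χ K E₀) (hE : E ∈ F) (huE : insert u (colorPart χ K E₀) ⊆ E)
    (huE' : colorPart χ K E₀ ⊆ E' → u ∈ E') : (E ∩ E').image χ ≠ K := by
  intro hK
  have hinter : E ∩ E' = colorPart χ K E₀ := by
    rw [← h.colorPart_image hE inter_subset_left, hK]
    exact h.colorPart_eq_of_subset hE₀ hE ((subset_insert _ _).trans huE)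
  exact hu (hinter ▸ mem_inter.2 ⟨huE (mem_insert_self _ _), huE' (hinter ▸ inter_subset_right)⟩)

/-- Repeatedly delete all edges through a `K`-part that is not a rich kernel, keeping in `D K`
those of them that pass through one further popular vertex. -/
lemma exists_cleaning (h : IsRainbow F χ) (s : ℕ) (J : Finset (Finset κ)) :
    ∃ G ⊆ F, ∃ D : Finset κ → Finset (Finset V), (∀ K, D K ⊆ F) ∧
      #F ≤ #G + s * ∑ K ∈ J, #(D K) ∧
      (∀ K ∈ J, ∀ E ∈ G, IsRichKernel s G (colorPart χ K E)) ∧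
      ∀ K, ∀ E ∈ D K, ∀ E' ∈ D K, (E ∩ E').image χ ≠ K := by
  induction F using strongInduction with
  | H F ih =>
    by_cases hstable : ∀ K ∈ J, ∀ E ∈ F, IsRichKernel s F (colorPart χ K E)
    · exact ⟨F, Subset.rfl, fun _ => ∅, by simp, by simp, hstable, by simp⟩
    push Not at hstable
    obtain ⟨K₀, hK₀, E₀, hE₀, hpoor⟩ := hstable
    set B := colorPart χ K₀ E₀
    have hE₀B : E₀ ∈ {E ∈ F | B ⊆ E} := mem_filter.2 ⟨hE₀, colorPart_subset⟩
    obtain ⟨u, hu, hcard⟩ := exists_card_le_mul_card_insert hpoor ⟨E₀, hE₀B⟩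
    set R := {E ∈ F | B ⊆ E}
    set R' := {E ∈ F | insert u B ⊆ E}
    obtain ⟨G, hG, D, hDF, hFG, hrich, hD⟩ := ih (F \ R)
      (sdiff_ssubset (filter_subset _ _) ⟨E₀, hE₀B⟩) (h.mono sdiff_subset)
    have hR'R : R' ⊆ R := monotone_filter_right F fun E _ hE => (subset_insert u B).trans hE
    have hR' {E E'} (hE : E ∈ R') (hE' : E' ∈ D K₀ ∪ R') : (E ∩ E').image χ ≠ K₀ := by
      refine h.image_inter_ne hE₀ hu (mem_filter.1 hE).1 (mem_filter.1 hE).2 fun hBE' => ?_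
      rcases mem_union.1 hE' with hE' | hE'
      · obtain ⟨hE'F, hE'R⟩ := mem_sdiff.1 (hDF K₀ hE')
        exact absurd (mem_filter.2 ⟨hE'F, hBE'⟩) hE'R
      · exact (mem_filter.1 hE').2 (mem_insert_self u B)
    refine ⟨G, hG.trans sdiff_subset, Function.update D K₀ (D K₀ ∪ R'), fun K => ?_, ?_, hrich,
      fun K E hE E' hE' => ?_⟩
    · rcases eq_or_ne K K₀ with rfl | hK
      · simpa using union_subset ((hDF K).trans sdiff_subset) (filter_subset _ _)
      · simpa [hK] using (hDF K).trans sdiff_subset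
    · have hdisj : Disjoint (D K₀) R' :=
        disjoint_of_subset_left (hDF K₀) (disjoint_of_subset_right hR'R sdiff_disjoint)
      have hsplit : #(F \ R) + #R = #F := card_sdiff_add_card_eq_card (filter_subset _ _)
      rw [← add_sum_erase J _ hK₀] at hFG ⊢
      rw [Function.update_self, card_union_of_disjoint hdisj,
        sum_congr rfl fun K hK => by rw [Function.update_of_ne (ne_of_mem_erase hK)]]
      linarith
    · rcases eq_or_ne K K₀ with rfl | hK
      · rw [Function.update_self] at hE hE'
        by_cases hER : E ∈ R'
        · exact hR' hER hE'
        by_cases hER' : E' ∈ R'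
        · exact inter_comm E E' ▸ hR' hER' hE
        · exact hD K E ((mem_union.1 hE).resolve_right hER) E'
            ((mem_union.1 hE').resolve_right hER')
      · rw [Function.update_of_ne hK] at hE hE'
        exact hD K E hE E' hE'

end IsRainbow

/-- The homogeneous families of Füredi, with intersection structure `J`: two distinct members meet
in a set whose colour set lies in `J`, and conversely the part of every member with colours in a
member of `J` is a rich kernel. -/
structure IsHomogeneous [DecidableEq V] [DecidableEq κ] [Fintype κ] (s : ℕ)
    (F : Finset (Finset V)) (χ : V → κ) (J : Finset (Finset κ)) : Prop where
  rainbow : IsRainbow F χ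
  inter_mem : ∀ E ∈ F, ∀ E' ∈ F, E ≠ E' → (E ∩ E').image χ ∈ J
  rich : ∀ K ∈ J, ∀ E ∈ F, IsRichKernel s F (colorPart χ K E)
  univ_notMem : univ ∉ J

/-- The factor lost in passing to a homogeneous subfamily of a rainbow family with `j` possible
colour sets of intersections. -/
def cleaningConst (s : ℕ) : ℕ → ℕ
  | 0 => 1
  | j + 1 => 1 + s * (j + 1) * cleaningConst s j

/-- The factor lost in passing to a homogeneous subfamily of an `r`-uniform family: `r ^ r` for
making it rainbow, and the rest for cleaning up its intersections. -/
def homogConst (s r : ℕ) : ℕ := r ^ r * cleaningConst s (2 ^ r - 1)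

lemma cleaningConst_pos (s : ℕ) : ∀ j, 0 < cleaningConst s j
  | 0 => Nat.one_pos
  | _ + 1 => Nat.add_pos_left Nat.one_pos _

lemma homogConst_pos (s r : ℕ) : 0 < homogConst s r :=
  Nat.mul_pos Nat.pow_self_pos (cleaningConst_pos s _)

variable [Fintype κ]

lemma IsRainbow.exists_isHomogeneous [DecidableEq V] [DecidableEq κ]
    {F : Finset (Finset V)} {χ : V → κ} (h : IsRainbow F χ) (s : ℕ)
    {J : Finset (Finset κ)} (hJ : univ ∉ J)
    (hFJ : ∀ E ∈ F, ∀ E' ∈ F, E ≠ E' → (E ∩ E').image χ ∈ J) :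
    ∃ F' ⊆ F, ∃ J', #F ≤ cleaningConst s #J * #F' ∧ IsHomogeneous s F' χ J' := by
  induction hj : #J generalizing F J with
  | zero =>
    obtain rfl := card_eq_zero.1 hj
    exact ⟨F, Subset.rfl, ∅, by simp [cleaningConst], h, hFJ, by simp, by simp⟩
  | succ j ih =>
    obtain ⟨G, hG, D, hDF, hFG, hrich, hD⟩ := h.exists_cleaning s J
    obtain ⟨K, hK, hmax⟩ := J.exists_max_image (fun K => #(D K)) (card_pos.1 (by omega))
    obtain ⟨F', hF', J', hDF', hhom⟩ := ih (h.mono (hDF K)) (J := J.erase K)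
      (fun hu => hJ (mem_of_mem_erase hu))
      (fun E hE E' hE' hne => mem_erase.2
        ⟨hD K E hE E' hE', hFJ E (hDF K hE) E' (hDF K hE') hne⟩)
      (by rw [card_erase_of_mem hK, hj, Nat.add_sub_cancel])
    have hFle : #F ≤ #G + s * (j + 1) * cleaningConst s j * #F' := calc
      #F ≤ #G + s * (#J * #(D K)) := hFG.trans (by gcongr; exact sum_le_card_nsmul _ _ _ hmax)
      _ ≤ #G + s * ((j + 1) * (cleaningConst s j * #F')) := by rw [hj]; gcongr
      _ = _ := by ring
    rcases le_total #G #F' with hle | hle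
    · refine ⟨F', hF'.trans (hDF K), J', hFle.trans ?_, hhom⟩
      rw [cleaningConst, add_mul, one_mul]
      gcongr
    · refine ⟨G, hG, J, hFle.trans ?_, h.mono hG,
        fun E hE E' hE' => hFJ E (hG hE) E' (hG hE'), hrich, hJ⟩
      rw [cleaningConst, add_mul, one_mul]
      gcongr

lemma card_fun_le_mul_card_bijOn [Fintype V] {E : Finset V} (hE : #E = Fintype.card κ) :
    Fintype.card (V → κ) ≤
      Fintype.card κ ^ Fintype.card κ * #{χ : V → κ | Set.BijOn χ E Set.univ} := by
  classical
  obtain ⟨e⟩ : Nonempty (E ≃ κ) := Fintype.card_eq.1 (by simpa using hE)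
  let recolor (χ : V → κ) (x : V) : κ := if hx : x ∈ E then e ⟨x, hx⟩ else χ x
  have hrecolor (χ) : Set.BijOn (recolor χ) E Set.univ := by
    refine ⟨Set.mapsTo_univ _ _, fun x hx y hy hxy => ?_, fun c _ =>
      ⟨e.symm c, (e.symm c).2, by simp [recolor]⟩⟩
    have hx' : x ∈ E := hx
    have hy' : y ∈ E := hy
    simpa [recolor, hx', hy'] using hxy
  calc Fintype.card (V → κ)
      ≤ #((univ : Finset (E → κ)) ×ˢ ({χ | Set.BijOn χ E Set.univ} : Finset (V → κ))) := by
        refine card_le_card_of_injOn (fun χ => (fun x : E => χ x, recolor χ))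
          (fun χ _ => by simpa using hrecolor χ) fun χ _ χ' _ h => funext fun x => ?_
        rw [Prod.mk.injEq] at h
        by_cases hx : x ∈ E
        · exact congrFun h.1 ⟨x, hx⟩
        · simpa [recolor, hx] using congrFun h.2 x
    _ = _ := by simp [card_product, hE]

lemma exists_isRainbow [Finite V] [Nonempty κ] {F : Finset (Finset V)}
    (hF : ∀ E ∈ F, #E = Fintype.card κ) :
    ∃ F' ⊆ F, ∃ χ : V → κ, #F ≤ Fintype.card κ ^ Fintype.card κ * #F' ∧ IsRainbow F' χ := by
  classical
  have := Fintype.ofFinite V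
  let rainbowPart (χ : V → κ) : Finset (Finset V) := F.filter fun E => Set.BijOn χ E Set.univ
  obtain ⟨χ, -, hχ⟩ : ∃ χ ∈ (univ : Finset (V → κ)),
      #F ≤ Fintype.card κ ^ Fintype.card κ * #(rainbowPart χ) := by
    refine exists_le_of_sum_le univ_nonempty ?_
    calc ∑ _χ : V → κ, #F = ∑ _E ∈ F, Fintype.card (V → κ) := by
          simp only [sum_const, card_univ, smul_eq_mul, mul_comm]
      _ ≤ ∑ E ∈ F, Fintype.card κ ^ Fintype.card κ * #{χ : V → κ | Set.BijOn χ E Set.univ} :=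
          sum_le_sum fun E hE => card_fun_le_mul_card_bijOn (hF E hE)
      _ = ∑ χ, Fintype.card κ ^ Fintype.card κ * #(rainbowPart χ) := by
          rw [← mul_sum, ← mul_sum]
          exact congrArg _ (sum_card_bipartiteAbove_eq_sum_card_bipartiteBelow
            fun (χ : V → κ) (E : Finset V) => Set.BijOn χ E Set.univ).symm
  exact ⟨rainbowPart χ, filter_subset _ _, χ, hχ, fun E hE => (mem_filter.1 hE).2⟩

theorem exists_isHomogeneous [Finite V] [DecidableEq V] [DecidableEq κ] [Nonempty κ] (s : ℕ)
    {F : Finset (Finset V)} (hF : ∀ E ∈ F, #E = Fintype.card κ) :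
    ∃ F' ⊆ F, ∃ (χ : V → κ) (J : Finset (Finset κ)),
      #F ≤ homogConst s (Fintype.card κ) * #F' ∧ IsHomogeneous s F' χ J := by
  obtain ⟨F₁, hF₁, χ, hFF₁, hrainbow⟩ := exists_isRainbow hF
  have huniv {E E'} (hE : E ∈ F₁) (hE' : E' ∈ F₁) (h : (E ∩ E').image χ = univ) : E = E' := by
    have hinter := hrainbow.colorPart_image hE (inter_subset_left (s₂ := E'))
    have hinter' := hrainbow.colorPart_image hE' (inter_subset_right (s₁ := E))
    simp only [h, colorPart, mem_univ, filter_true] at hinter hinter'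
    exact hinter.trans hinter'.symm
  obtain ⟨F', hF', J, hcard, hhom⟩ := hrainbow.exists_isHomogeneous s
    (J := univ.erase univ) (notMem_erase _ _) fun E hE E' hE' hne =>
      mem_erase.2 ⟨fun h => hne (huniv hE hE' h), mem_univ _⟩
  refine ⟨F', hF'.trans hF₁, χ, J, hFF₁.trans ?_, hhom⟩
  rw [card_erase_of_mem (mem_univ _), card_univ, Fintype.card_finset] at hcard
  rw [homogConst, mul_assoc]
  gcongr

end Homogeneous

/-! ### Intersection structures -/

section IntersectionStructure

variable {κ : Type*} [Fintype κ] [DecidableEq κ] {J : Finset (Finset κ)}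

/-- Every colour set avoiding the two distinct colours `a` and `b` belongs to `J`. -/
def IsFreePair (J : Finset (Finset κ)) (a b : κ) : Prop :=
  a ≠ b ∧ ∀ K : Finset κ, a ∉ K → b ∉ K → K ∈ J

/-- In a family with intersection structure `J`, the vertices of colour `c` act as the centres of
full stars which hardly overlap: the proper colour sets through `c` belong to `J`, and those
avoiding `c` do only if they are small. -/
structure IsStarCenter (J : Finset (Finset κ)) (c : κ) : Prop where
  mem : ∀ K, K ≠ univ → c ∈ K → K ∈ J
  card_lt : ∀ K ∈ J, c ∉ K → #K + 3 < Fintype.card κ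

lemma mem_of_separated (hJ : InfClosed (J : Set (Finset κ))) {K : Finset κ} (hK : K ≠ univ)
    (hsep : ∀ d ∉ K, ∃ X ∈ J, K ⊆ X ∧ d ∉ X) : K ∈ J := by
  choose! X hXJ hKX hdX using hsep
  have hne : Kᶜ.Nonempty := by rwa [nonempty_iff_ne_empty, Ne, compl_eq_empty_iff]
  have hKinf : K = Kᶜ.inf' hne X := by
    refine le_antisymm (le_inf' _ _ fun d hd => hKX d (mem_compl.1 hd)) fun x hx => ?_
    by_contra hxK
    exact hdX x hxK (inf'_le X (mem_compl.2 hxK) hx)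
  rw [hKinf]
  exact inf'_mem (J : Set (Finset κ)) (fun _ hX _ hY => hJ hX hY) _ _ _
    fun d hd => hXJ d (mem_compl.1 hd)

lemma compl_pair_mem (hu : univ ∉ J) {a b : κ} (hcover : ∃ L ∈ J, {a, b}ᶜ ⊆ L)
    (ha : {a}ᶜ ∉ J) (hb : {b}ᶜ ∉ J) : {a, b}ᶜ ∈ J := by
  obtain ⟨L, hL, hsub⟩ := hcover
  have hsub : Lᶜ ⊆ {a, b} := compl_le_iff_compl_le.1 hsub
  rw [← coe_subset, coe_pair, Set.subset_pair_iff_eq] at hsub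
  have hLc {M : Finset κ} (h : (↑Lᶜ : Set κ) = M) : L = Mᶜ := by
    rw [← coe_injective h, compl_compl]
  rcases hsub with h | h | h | h
  · exact absurd (hLc (M := ∅) (by simpa using h) ▸ hL) (by simpa using hu)
  · exact absurd (hLc (M := {a}) (by simpa using h) ▸ hL) ha
  · exact absurd (hLc (M := {b}) (by simpa using h) ▸ hL) hb
  · exact hLc (M := {a, b}) (by simpa using h) ▸ hL

lemma isFreePair_of_compl_notMem (hJ : InfClosed (J : Set (Finset κ))) (hu : univ ∉ J)
    (hcover : ∀ a b : κ, a ≠ b → ∃ L ∈ J, {a, b}ᶜ ⊆ L) {a b : κ} (hab : a ≠ b)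
    (ha : {a}ᶜ ∉ J) (hb : {b}ᶜ ∉ J) : IsFreePair J a b := by
  refine ⟨hab, fun K haK hbK => mem_of_separated hJ (fun h => haK (h ▸ mem_univ a)) fun d hd => ?_⟩
  by_cases hdJ : {d}ᶜ ∈ J
  · exact ⟨_, hdJ, by simpa [subset_compl_comm] using hd, by simp⟩
  obtain ⟨e, heK, hed, heJ⟩ : ∃ e ∉ K, e ≠ d ∧ {e}ᶜ ∉ J := by
    rcases eq_or_ne a d with rfl | had
    · exact ⟨b, hbK, hab.symm, hb⟩
    · exact ⟨a, haK, had, ha⟩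
  refine ⟨_, compl_pair_mem hu (hcover d e hed.symm) hdJ heJ, ?_, by simp⟩
  simp only [subset_compl_iff_disjoint_right, disjoint_insert_right, disjoint_singleton_right]
  exact ⟨hd, heK⟩

theorem exists_isStarCenter (hκ : 3 ≤ Fintype.card κ) (hJ : InfClosed (J : Set (Finset κ)))
    (hu : univ ∉ J) (hcover : ∀ a b : κ, a ≠ b → ∃ L ∈ J, {a, b}ᶜ ⊆ L)
    (hfree : ∀ a b : κ, ¬ IsFreePair J a b) : ∃ c, IsStarCenter J c := by
  obtain ⟨c, hc⟩ : ∃ c : κ, {c}ᶜ ∉ J := by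
    by_contra! hall
    obtain ⟨a, b, hab⟩ := Fintype.exists_pair_of_one_lt_card (show 1 < Fintype.card κ by omega)
    exact hfree a b ⟨hab, fun K ha _ => mem_of_separated hJ (fun h => ha (h ▸ mem_univ a))
      fun d hd => ⟨_, hall d, by simpa [subset_compl_comm] using hd, by simp⟩⟩
  have hcompl {d : κ} (hd : d ≠ c) : {d}ᶜ ∈ J := by
    by_contra hdJ
    exact hfree d c (isFreePair_of_compl_notMem hJ hu hcover hd hdJ hc)
  have hsep {K : Finset κ} (hK : K ≠ univ) (hcK : c ∉ K → ∃ X ∈ J, K ⊆ X ∧ c ∉ X) : K ∈ J := by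
    refine mem_of_separated hJ hK fun d hd => ?_
    rcases eq_or_ne d c with rfl | hdc
    · exact hcK hd
    · exact ⟨_, hcompl hdc, by simpa [subset_compl_comm] using hd, by simp⟩
  refine ⟨c, fun K hK hcK => hsep hK fun h => absurd hcK h, fun K hK hcK => ?_⟩
  by_contra! hcard
  obtain ⟨P, hKP, hPc, hP⟩ := exists_subsuperset_card_eq (n := 2)
    (erase_subset_erase c (subset_univ Kᶜ))
    (by rw [card_erase_of_mem (mem_compl.2 hcK), card_compl]; omega)
    (by rw [card_erase_of_mem (mem_univ c), card_univ]; omega)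
  obtain ⟨a, b, hab, rfl⟩ := card_eq_two.1 hP
  refine hfree a b ⟨hab, fun L haL hbL => hsep (fun h => haL (h ▸ mem_univ a)) fun hcL =>
    ⟨K, hK, fun x hx => ?_, hcK⟩⟩
  by_contra hxK
  have hxP := hKP (mem_erase.2 ⟨fun h => hcL (h ▸ hx), mem_compl.2 hxK⟩)
  rcases mem_insert.1 hxP with rfl | hxb
  · exact haL hx
  · exact hbL (mem_singleton.1 hxb ▸ hx)

namespace IsHomogeneous

variable {V : Type*} [DecidableEq V] {s : ℕ} {F : Finset (Finset V)} {χ : V → κ}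

/-- Extend two kernels inside one edge to edges that are otherwise disjoint. -/
lemma infClosed (h : IsHomogeneous s F χ J) (hs : 2 * Fintype.card κ ≤ s) (hne : F.Nonempty) :
    InfClosed (J : Set (Finset κ)) := by
  intro K hK L hL
  obtain ⟨E, hE⟩ := hne
  obtain ⟨E₁, hE₁, hKE₁, hd₁⟩ := h.rich K hK E hE E (by rw [h.rainbow.card_eq hE]; omega)
  obtain ⟨E₂, hE₂, hLE₂, hd₂⟩ := h.rich L hL E hE (E ∪ E₁) ((card_union_le _ _).trans
    (by rw [h.rainbow.card_eq hE, h.rainbow.card_eq hE₁]; omega))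
  have hinter : E₁ ∩ E₂ = colorPart χ (K ∩ L) E := by
    have h₁ : E₁ ∩ E ⊆ colorPart χ K E := fun x hx => by_contra fun hxK =>
      disjoint_left.1 hd₁ (mem_sdiff.2 ⟨(mem_inter.1 hx).1, hxK⟩) (mem_inter.1 hx).2
    have h₂ : E₂ ∩ (E ∪ E₁) ⊆ colorPart χ L E := fun x hx => by_contra fun hxL =>
      disjoint_left.1 hd₂ (mem_sdiff.2 ⟨(mem_inter.1 hx).1, hxL⟩) (mem_inter.1 hx).2
    simp only [Finset.subset_iff, mem_inter, mem_union, mem_colorPart] at h₁ h₂ hKE₁ hLE₂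
    ext x
    simp only [mem_inter, mem_colorPart]
    grind
  rcases eq_or_ne E₁ E₂ with rfl | hne
  · refine absurd ?_ h.univ_notMem
    rw [inter_self] at hinter
    have hKL : univ = K ∩ L := by
      rw [← h.rainbow.image_eq_univ hE₁, hinter, h.rainbow.image_colorPart hE]
    rwa [← (inter_eq_univ.1 hKL.symm).1]
  · have hJ := h.inter_mem E₁ hE₁ E₂ hE₂ hne
    rwa [hinter, h.rainbow.image_colorPart hE] at hJ

lemma card_le_pow_of_uncovered [Fintype V] (h : IsHomogeneous s F χ J) {K : Finset κ}
    (hK : ∀ L ∈ J, ¬ K ⊆ L) : #F ≤ Fintype.card V ^ #K := by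
  have hinj : Set.InjOn (colorPart χ K) (F : Set (Finset V)) := fun E hE E' hE' heq => by
    by_contra hne
    refine hK _ (h.inter_mem E hE E' hE' hne) ?_
    have hsub : colorPart χ K E ⊆ E ∩ E' :=
      subset_inter colorPart_subset (heq ▸ colorPart_subset)
    simpa only [h.rainbow.image_colorPart hE] using image_subset_image (f := χ) hsub
  calc #F ≤ #(powersetCard #K (univ : Finset V)) := card_le_card_of_injOn _
        (fun E hE => by simp [mem_powersetCard, h.rainbow.card_colorPart hE]) hinj
    _ ≤ Fintype.card V ^ #K := by
        rw [card_powersetCard, card_univ]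
        exact Nat.choose_le_pow _ _

theorem card_le_pow_or_exists_isStarCenter [Fintype V] (h : IsHomogeneous s F χ J)
    (hκ : 3 ≤ Fintype.card κ) (hs : 2 * Fintype.card κ ≤ s) (hne : F.Nonempty)
    (hfree : ∀ a b : κ, ¬ IsFreePair J a b) :
    #F ≤ Fintype.card V ^ (Fintype.card κ - 2) ∨ ∃ c, IsStarCenter J c := by
  by_cases hcover : ∀ a b : κ, a ≠ b → ∃ L ∈ J, {a, b}ᶜ ⊆ L
  · exact .inr (exists_isStarCenter hκ (h.infClosed hs hne) h.univ_notMem hcover hfree)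
  · push Not at hcover
    obtain ⟨a, b, hab, hL⟩ := hcover
    refine .inl ((h.card_le_pow_of_uncovered hL).trans_eq ?_)
    rw [card_compl, card_pair hab]

lemma mem_of_pow_lt_card [Fintype V] (h : IsHomogeneous s F χ J) (hs : 2 * Fintype.card κ ≤ s)
    (hF : Fintype.card V ^ (Fintype.card κ - 1) < #F) {K : Finset κ} (hK : K ≠ univ) : K ∈ J := by
  have hcompl (c : κ) : {c}ᶜ ∈ J := by
    by_contra hc
    refine hF.not_ge ((h.card_le_pow_of_uncovered (K := {c}ᶜ) fun L hL hcL => ?_).trans_eq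
      (by rw [card_compl, card_singleton]))
    rcases (isCoatom_compl_singleton c).le_iff.1 hcL with rfl | rfl
    · exact h.univ_notMem hL
    · exact hc hL
  exact mem_of_separated (h.infClosed hs (card_pos.1 (Nat.zero_lt_of_lt hF))) hK fun d hd =>
    ⟨_, hcompl d, by simpa [subset_compl_comm] using hd, by simp⟩

end IsHomogeneous

end IntersectionStructure

/-! ### Hypertrees -/

section Hypertree

variable {γ κ : Type*} [DecidableEq γ] {T : Finset (Finset γ)}

lemma mem_hverts {x : γ} : x ∈ hverts T ↔ ∃ A ∈ T, x ∈ A := by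
  simp [hverts, mem_sup]

lemma subset_hverts {A : Finset γ} (hA : A ∈ T) : A ⊆ hverts T :=
  fun _ hx => mem_hverts.2 ⟨A, hA, hx⟩

lemma hverts_insert (A : Finset γ) (T : Finset (Finset γ)) :
    hverts (insert A T) = A ∪ hverts T := sup_insert

lemma hverts_image_sdiff (T : Finset (Finset γ)) (X : Finset γ) :
    hverts (T.image (· \ X)) = hverts T \ X := by
  ext x
  simp only [mem_hverts, exists_mem_image, mem_sdiff]
  grind

/-- Hypergraph trees with edges of arbitrary sizes: every added edge meets the union of the
previous ones within one of them. -/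
inductive IsHypertree : Finset (Finset γ) → Prop
  | empty : IsHypertree ∅
  | insert {T : Finset (Finset γ)} {A : Finset γ} (hT : IsHypertree T)
      (hA : T.Nonempty → ∃ B ∈ T, A ∩ hverts T ⊆ B) : IsHypertree (insert A T)

lemma IsRTree.isHypertree {r : ℕ} (hT : IsRTree r T) : IsHypertree T := by
  obtain ⟨m, E, rfl, hE, -⟩ := hT
  suffices h : ∀ k ≤ m, IsHypertree (({i | i.1 < k} : Finset (Fin m)).image E) by
    simpa using h m le_rfl
  intro k
  induction k with
  | zero => simpa using IsHypertree.empty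
  | succ k ih =>
    intro hk
    let i : Fin m := ⟨k, hk⟩
    have hIio : ({j | j.1 < k} : Finset (Fin m)) = Iio i := by ext j; simp [i, Fin.lt_def]
    have hIic : ({j | j.1 < k + 1} : Finset (Fin m)) = insert i (Iio i) := by
      ext j
      simp only [mem_filter, mem_univ, true_and, mem_insert, mem_Iio, i, Fin.lt_def, Fin.ext_iff]
      omega
    rw [hIic, image_insert]
    refine (hIio ▸ ih (by omega)).insert fun hne => ?_
    obtain ⟨j₀, hj₀⟩ := image_nonempty.1 hne
    have hj₀i : j₀ < i := mem_Iio.1 hj₀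
    obtain ⟨j, hj, hsub⟩ := hE i ((Nat.zero_le _).trans_lt (Fin.lt_def.1 hj₀i))
    exact ⟨E j, mem_image_of_mem _ (mem_Iio.2 hj), by rwa [hverts, sup_image, Function.id_comp]⟩

lemma IsRTree.card_eq {r : ℕ} (hT : IsRTree r T) {A : Finset γ} (hA : A ∈ T) : #A = r := by
  obtain ⟨m, E, rfl, -, hr⟩ := hT
  obtain ⟨i, -, rfl⟩ := mem_image.1 hA
  exact hr i

lemma exists_injOn_extension [Nonempty κ] {A D : Finset γ} {C : Finset κ} (hAC : #A ≤ #C)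
    {ψ : γ → κ} (hinj : Set.InjOn ψ ↑(A ∩ D)) (hmaps : Set.MapsTo ψ ↑(A ∩ D) C) :
    ∃ ψ' : γ → κ, Set.EqOn ψ ψ' D ∧ Set.InjOn ψ' A ∧ Set.MapsTo ψ' A C := by
  classical
  have hroom : #(A \ D) ≤ #(C \ (A ∩ D).image ψ) := by
    rw [← card_inter_add_card_sdiff A D] at hAC
    rw [card_sdiff_of_subset (image_subset_iff.2 hmaps), card_image_of_injOn hinj]
    omega
  obtain ⟨φ, hφmaps, hφinj⟩ := (A \ D).finite_toSet.exists_injOn_of_encard_le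
    (t := ((C \ (A ∩ D).image ψ : Finset κ) : Set κ)) (by
      rwa [Set.encard_coe_eq_coe_finsetCard, Set.encard_coe_eq_coe_finsetCard, Nat.cast_le])
  have hφ {x} (hx : x ∈ A \ D) : φ x ∈ C ∧ φ x ∉ (A ∩ D).image ψ := mem_sdiff.1 (hφmaps hx)
  have heq : Set.EqOn (fun x => if x ∈ D then ψ x else φ x) ψ ↑(A ∩ D) := fun x hx =>
    if_pos (mem_inter.1 hx).2
  have heq' : Set.EqOn (fun x => if x ∈ D then ψ x else φ x) φ ↑(A \ D) := fun x hx =>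
    if_neg (mem_sdiff.1 hx).2
  have hA : (A : Set γ) = ↑(A ∩ D) ∪ ↑(A \ D) := by
    rw [← coe_union, union_comm, sdiff_union_inter]
  refine ⟨fun x => if x ∈ D then ψ x else φ x, fun x hx => (if_pos hx).symm, ?_, ?_⟩
  · rw [hA, Set.injOn_union (disjoint_coe.2 (disjoint_sdiff_inter A D).symm)]
    refine ⟨hinj.congr heq.symm, hφinj.congr heq'.symm, fun x hx y hy hxy => ?_⟩
    have hxy : ψ x = φ y := (heq hx).symm.trans (hxy.trans (heq' hy))
    exact (hφ hy).2 (hxy ▸ mem_image_of_mem ψ hx)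
  · rw [hA]
    exact (hmaps.congr heq.symm).union fun x hx => heq' hx ▸ (hφ hx).1

namespace IsHypertree

lemma image_sdiff (hT : IsHypertree T) (X : Finset γ) : IsHypertree (T.image (· \ X)) := by
  induction hT with
  | empty => exact empty
  | @insert T A hT hA ih =>
    rw [image_insert]
    refine ih.insert fun hne => ?_
    obtain ⟨B, hB, hAB⟩ := hA (image_nonempty.1 hne)
    refine ⟨B \ X, mem_image_of_mem _ hB, fun x hx => ?_⟩
    simp only [hverts_image_sdiff, mem_inter, mem_sdiff] at hx
    exact mem_sdiff.2 ⟨hAB (mem_inter.2 ⟨hx.1.1, hx.2.1⟩), hx.1.2⟩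

lemma filter_mem (hT : IsHypertree T) (x : γ) : IsHypertree {A ∈ T | x ∈ A} := by
  induction hT with
  | empty => exact empty
  | @insert T A hT hA ih =>
    rw [filter_insert]
    split_ifs with hxA
    · refine ih.insert fun ⟨A', hA'⟩ => ?_
      obtain ⟨hA'T, hxA'⟩ := mem_filter.1 hA'
      obtain ⟨B, hB, hAB⟩ := hA ⟨A', hA'T⟩
      refine ⟨B, mem_filter.2 ⟨hB, hAB (mem_inter.2 ⟨hxA, subset_hverts hA'T hxA'⟩)⟩, ?_⟩
      exact (inter_subset_inter_left (sup_mono (filter_subset _ _))).trans hAB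
    · exact ih

lemma exists_coloring [Nonempty κ] (hT : IsHypertree T) {C : Finset κ} (hC : ∀ A ∈ T, #A ≤ #C) :
    ∃ ψ : γ → κ, ∀ A ∈ T, Set.InjOn ψ A ∧ Set.MapsTo ψ A C := by
  induction hT with
  | empty => exact ⟨fun _ => Classical.arbitrary κ, by simp⟩
  | @insert T A hT hA ih =>
    obtain ⟨ψ, hψ⟩ := ih fun B hB => hC B (mem_insert_of_mem hB)
    obtain ⟨hinj, hmaps⟩ :
        Set.InjOn ψ ↑(A ∩ hverts T) ∧ Set.MapsTo ψ ↑(A ∩ hverts T) C := by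
      rcases T.eq_empty_or_nonempty with rfl | hne
      · simp [hverts, Set.mapsTo_empty]
      obtain ⟨B, hB, hAB⟩ := hA hne
      exact ⟨(hψ B hB).1.mono hAB, (hψ B hB).2.mono_left hAB⟩
    obtain ⟨ψ', heq, hψ'⟩ := exists_injOn_extension (hC A (mem_insert_self A T)) hinj hmaps
    refine ⟨ψ', forall_mem_insert _ _ _ |>.2 ⟨hψ', fun B hB => ?_⟩⟩
    have heqB := heq.mono (coe_subset.2 (subset_hverts hB))
    exact ⟨(hψ B hB).1.congr heqB, (hψ B hB).2.congr heqB⟩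

end IsHypertree

section Embedding

variable {V : Type*} {ψ : γ → κ} {s : ℕ} {F : Finset (Finset V)} {χ : V → κ}

lemma IsRainbow.exists_extension [DecidableEq V] (h : IsRainbow F χ) {E : Finset V} (hE : E ∈ F)
    {A D : Finset γ} (hψ : Set.InjOn ψ A) {f : γ → V} (hf : Set.InjOn f D)
    (hχ : ∀ x ∈ D, χ (f x) = ψ x) (hAE : (A ∩ D).image f ⊆ E)
    (hdisj : Disjoint (E \ (A ∩ D).image f) (D.image f)) :
    ∃ f' : γ → V, Set.EqOn f f' D ∧ Set.InjOn f' ↑(A ∪ D) ∧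
      (∀ x ∈ A ∪ D, χ (f' x) = ψ x) ∧ A.image f' ⊆ E := by
  choose q hqE hqχ using h.exists_color hE
  have hq {x y : γ} (hx : x ∈ A) (hxD : x ∉ D) (hy : y ∈ D) : q (ψ x) ≠ f y := by
    intro hxy
    have hmem : q (ψ x) ∈ (A ∩ D).image f := by
      by_contra hnot
      exact disjoint_left.1 hdisj (mem_sdiff.2 ⟨hqE _, hnot⟩) (hxy ▸ mem_image_of_mem f hy)
    obtain ⟨z, hz, hzx⟩ := mem_image.1 hmem
    obtain ⟨hzA, hzD⟩ := mem_inter.1 hz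
    exact hxD (hψ hzA hx (by rw [← hχ z hzD, hzx, hqχ]) ▸ hzD)
  refine ⟨fun x => if x ∈ D then f x else q (ψ x), fun x hx => (if_pos hx).symm, ?_, ?_, ?_⟩
  · intro x hx y hy hxy
    simp only [coe_union, Set.mem_union, mem_coe] at hx hy
    by_cases hxD : x ∈ D <;> by_cases hyD : y ∈ D <;>
      simp only [hxD, hyD, if_true, if_false, or_false] at hx hy hxy
    · exact hf hxD hyD hxy
    · exact absurd hxy.symm (hq hy hyD hxD)
    · exact absurd hxy (hq hx hxD hyD)
    · exact hψ hx hy (by rw [← hqχ (ψ x), hxy, hqχ])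
  · intro x _
    dsimp only
    split_ifs with hxD
    · exact hχ x hxD
    · exact hqχ _
  · refine image_subset_iff.2 fun x hx => ?_
    split_ifs with hxD
    · exact hAE (mem_image_of_mem f (mem_inter.2 ⟨hx, hxD⟩))
    · exact hqE _

variable [Fintype κ] [DecidableEq κ] [DecidableEq V] {J : Finset (Finset κ)}

lemma IsHomogeneous.exists_extension (h : IsHomogeneous s F χ J) {E₁ : Finset V} (hE₁ : E₁ ∈ F)
    {A D : Finset γ} (hψ : Set.InjOn ψ A) {f : γ → V} (hf : Set.InjOn f D)
    (hχ : ∀ x ∈ D, χ (f x) = ψ x) (hAE₁ : (A ∩ D).image f ⊆ E₁) (hs : #D ≤ s)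
    (hJ : ¬ A ⊆ D → (A ∩ D).image ψ ∈ J) :
    ∃ f' : γ → V, Set.EqOn f f' D ∧ Set.InjOn f' ↑(A ∪ D) ∧
      (∀ x ∈ A ∪ D, χ (f' x) = ψ x) ∧ ∃ E ∈ F, A.image f' ⊆ E := by
  by_cases hAD : A ⊆ D
  · rw [inter_eq_left.2 hAD] at hAE₁
    exact ⟨f, Set.eqOn_refl _ _, by rwa [union_eq_right.2 hAD], by rwa [union_eq_right.2 hAD],
      E₁, hE₁, hAE₁⟩
  have hcolors : (A ∩ D).image ψ = ((A ∩ D).image f).image χ := by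
    rw [image_image]
    exact image_congr fun x hx => (hχ x (mem_inter.1 hx).2).symm
  have hkernel := h.rich _ (hJ hAD) E₁ hE₁
  rw [hcolors, h.rainbow.colorPart_image hE₁ hAE₁] at hkernel
  obtain ⟨E, hE, hAE, hdisj⟩ := hkernel (D.image f) (card_image_le.trans hs)
  obtain ⟨f', heq, hf', hχ', hA'⟩ := h.rainbow.exists_extension hE hψ hf hχ hAE hdisj
  exact ⟨f', heq, hf', hχ', E, hE, hA'⟩

/-- Embed the edges one by one, each new edge into a member of `F` that contains the image of its
intersection with the previous edges, a rich kernel, and is otherwise disjoint from them. -/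
theorem IsHypertree.exists_embedding (hT : IsHypertree T) (h : IsHomogeneous s F χ J)
    (hne : F.Nonempty) (hs : #(hverts T) ≤ s) (hψ : ∀ A ∈ T, Set.InjOn ψ A)
    (hJ : ∀ S ⊆ T, S.Nonempty → ∀ A ∈ T, ¬ A ⊆ hverts S → (A ∩ hverts S).image ψ ∈ J) :
    ∃ f : γ → V, Set.InjOn f (hverts T) ∧ (∀ x ∈ hverts T, χ (f x) = ψ x) ∧
      ∀ A ∈ T, ∃ E ∈ F, A.image f ⊆ E := by
  obtain ⟨E₀, hE₀⟩ := hne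
  induction hT with
  | empty =>
    exact ⟨fun x => (h.rainbow.exists_color hE₀ (ψ x)).choose,
      by simp [hverts], by simp [hverts], by simp⟩
  | @insert T A hT hA ih =>
    have hsub := subset_insert A T
    obtain ⟨f, hf, hχ, hfT⟩ := ih ((card_le_card (sup_mono hsub)).trans hs)
      (fun B hB => hψ B (hsub hB)) fun S hS hSne B hB => hJ S (hS.trans hsub) hSne B (hsub hB)
    suffices ∃ f' : γ → V, Set.EqOn f f' (hverts T) ∧ Set.InjOn f' ↑(A ∪ hverts T) ∧
        (∀ x ∈ A ∪ hverts T, χ (f' x) = ψ x) ∧ ∃ E ∈ F, A.image f' ⊆ E by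
      obtain ⟨f', heq, hf', hχ', hA'⟩ := this
      refine ⟨f', by rwa [hverts_insert], by rwa [hverts_insert],
        (forall_mem_insert _ _ _).2 ⟨hA', fun B hB => ?_⟩⟩
      rw [← image_congr (heq.mono (coe_subset.2 (subset_hverts hB)))]
      exact hfT B hB
    have hψA := hψ A (mem_insert_self A T)
    rcases T.eq_empty_or_nonempty with rfl | hTne
    · obtain ⟨f', hf'⟩ := h.rainbow.exists_extension hE₀ (D := hverts ∅) hψA hf hχ
        (by simp [hverts]) (by simp [hverts])
      exact ⟨f', hf'.1, hf'.2.1, hf'.2.2.1, E₀, hE₀, hf'.2.2.2⟩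
    obtain ⟨B, hB, hAB⟩ := hA hTne
    obtain ⟨E₁, hE₁, hBE₁⟩ := hfT B hB
    have hAE₁ : (A ∩ hverts T).image f ⊆ E₁ := (image_subset_image hAB).trans hBE₁
    exact h.exists_extension hE₁ hψA hf hχ hAE₁ ((card_le_card (sup_mono hsub)).trans hs)
      (hJ T hsub hTne A (mem_insert_self A T))

lemma IsHypertree.containsCopy (hT : IsHypertree T) (h : IsHomogeneous s F χ J)
    (hne : F.Nonempty) (hs : #(hverts T) ≤ s) (hcard : ∀ A ∈ T, #A = Fintype.card κ)
    (hψ : ∀ A ∈ T, Set.InjOn ψ A)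
    (hJ : ∀ S ⊆ T, S.Nonempty → ∀ A ∈ T, ¬ A ⊆ hverts S → (A ∩ hverts S).image ψ ∈ J) :
    ContainsCopy F T := by
  obtain ⟨f, hf, -, hfT⟩ := hT.exists_embedding h hne hs hψ hJ
  refine ⟨f, hf, fun A hA => ?_⟩
  obtain ⟨E, hE, hAE⟩ := hfT A hA
  rwa [eq_of_subset_of_card_le hAE (by
    rw [card_image_of_injOn (hf.mono (coe_subset.2 (subset_hverts hA))), hcard A hA,
      h.rainbow.card_eq hE])]

end Embedding

end Hypertree

/-! ### Copies of hypergraphs in homogeneous families -/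

section Copies

variable {γ V : Type*} [DecidableEq γ] [DecidableEq V] {T : Finset (Finset γ)}
  {F : Finset (Finset V)}

section ContainsCopy

variable [DecidableEq α] {H : Finset (Finset α)}

lemma ContainsCopy.mono {F' : Finset (Finset V)} (h : ContainsCopy F' H) (hF : F' ⊆ F) :
    ContainsCopy F H :=
  let ⟨f, hf, hfH⟩ := h
  ⟨f, hf, fun E hE => hF (hfH E hE)⟩

lemma ContainsCopy.trans (h : ContainsCopy F T) (h' : ContainsCopy T H) : ContainsCopy F H := by
  obtain ⟨f, hf, hfT⟩ := h
  obtain ⟨g, hg, hgH⟩ := h'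
  refine ⟨f ∘ g, hf.comp hg fun x hx => ?_, fun E hE => ?_⟩
  · obtain ⟨E, hE, hx⟩ := mem_hverts.1 hx
    exact subset_hverts (hgH E hE) (mem_image_of_mem g hx)
  · rw [← image_image]
    exact hfT _ (hgH E hE)

lemma ContainsCopy.exists_star (h : ContainsCopy T H) {x : α} (hx : ∀ E ∈ H, x ∈ E) :
    ∃ y, ContainsCopy {A ∈ T | y ∈ A} H := by
  obtain ⟨g, hg, hgH⟩ := h
  exact ⟨g x, g, hg, fun E hE => mem_filter.2 ⟨hgH E hE, mem_image_of_mem g (hx E hE)⟩⟩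

/-- Replace an embeddable hypergraph by its image, carrying a cross-cut along. -/
lemma ContainsCopy.exists_subset (h : ContainsCopy T H) {S : Finset α} (hS : IsCrossCut H S) :
    ∃ H' ⊆ T, ContainsCopy H' H ∧ ∃ S', #S' ≤ #S ∧ IsCrossCut H' S' := by
  obtain ⟨g, hg, hgH⟩ := h
  refine ⟨H.image (image g), image_subset_iff.2 hgH, ⟨g, hg, fun E hE => mem_image_of_mem _ hE⟩,
    (S ∩ hverts H).image g, card_image_le.trans (card_le_card inter_subset_left), ?_⟩
  simp only [IsCrossCut, forall_mem_image]
  intro E hE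
  have hEH : E ⊆ hverts H := subset_hverts hE
  have hinter : E.image g ∩ (S ∩ hverts H).image g = (E ∩ S).image g := by
    rw [← image_inter_of_injOn _ _ (hg.mono (Set.union_subset (coe_subset.2 hEH)
      (coe_subset.2 inter_subset_right))), ← inter_assoc,
      inter_eq_left.2 (inter_subset_left.trans hEH)]
  rw [hinter, card_image_of_injOn (hg.mono (coe_subset.2 (inter_subset_left.trans hEH))), hS E hE]

lemma IsCrossCut.eq_of_mem {S E : Finset α} (hS : IsCrossCut H S) (hE : E ∈ H) {x y : α}
    (hx : x ∈ E) (hxS : x ∈ S) (hy : y ∈ E) (hyS : y ∈ S) : x = y :=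
  card_le_one.1 (hS E hE).le x (mem_inter.2 ⟨hx, hxS⟩) y (mem_inter.2 ⟨hy, hyS⟩)

lemma IsCrossCut.exists_mem {S E : Finset α} (hS : IsCrossCut H S) (hE : E ∈ H) :
    ∃ x ∈ E, x ∈ S :=
  (card_pos.1 (hS E hE).ge).imp fun _ => mem_inter.1

lemma IsCrossCut.card_sdiff {S E : Finset α} (hS : IsCrossCut H S) (hE : E ∈ H) :
    #(E \ S) = #E - 1 := by
  rw [Finset.card_sdiff, inter_comm, hS E hE]

lemma eq_of_hdeg_eq_one {x : α} (hx : hdeg H x = 1) {E E' : Finset α} (hE : E ∈ H)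
    (hE' : E' ∈ H) (hxE : x ∈ E) (hxE' : x ∈ E') : E = E' :=
  card_le_one.1 hx.le E (mem_filter.2 ⟨hE, hxE⟩) E' (mem_filter.2 ⟨hE', hxE'⟩)

lemma notMem_hverts_of_hdeg_eq_one {x : α} (hx : hdeg H x = 1) {E : Finset α} (hE : E ∈ H)
    (hxE : x ∈ E) {G : Finset (Finset α)} (hGH : G ⊆ H) (hEG : E ∉ G) : x ∉ hverts G := by
  intro hxG
  obtain ⟨E', hE', hxE'⟩ := mem_hverts.1 hxG
  exact hEG (eq_of_hdeg_eq_one hx hE (hGH hE') hxE hxE' ▸ hE')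

lemma Reducible.exists_crossCuts (h : Reducible 2 H) :
    ∃ P Q : Finset α, Disjoint P Q ∧ IsCrossCut H P ∧ IsCrossCut H Q ∧
      (∀ x ∈ P, hdeg H x = 1) ∧ ∀ x ∈ Q, hdeg H x = 1 := by
  have hpair : ∀ E ∈ H, ∃ p q : α, p ∈ E ∧ hdeg H p = 1 ∧ q ∈ E ∧ hdeg H q = 1 ∧ p ≠ q := by
    intro E hE
    obtain ⟨p, hp, q, hq, hpq⟩ := one_lt_card.1 (h E hE)
    rw [mem_filter] at hp hq
    exact ⟨p, q, hp.1, hp.2, hq.1, hq.2, hpq⟩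
  rcases H.eq_empty_or_nonempty with rfl | ⟨E₀, hE₀⟩
  · exact ⟨∅, ∅, by simp [IsCrossCut]⟩
  have : Nonempty α := ⟨(hpair E₀ hE₀).choose⟩
  choose! p q hpE hp hqE hq hpq using hpair
  have hcross {f : Finset α → α} (hfE : ∀ E ∈ H, f E ∈ E) (hf : ∀ E ∈ H, hdeg H (f E) = 1) :
      IsCrossCut H (H.image f) := by
    refine fun E hE => card_eq_one.2 ⟨f E, eq_singleton_iff_unique_mem.2
      ⟨mem_inter.2 ⟨hfE E hE, mem_image_of_mem f hE⟩, fun x hx => ?_⟩⟩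
    obtain ⟨hxE, hx⟩ := mem_inter.1 hx
    obtain ⟨E', hE', rfl⟩ := mem_image.1 hx
    rw [eq_of_hdeg_eq_one (hf E' hE') hE' hE (hfE E' hE') hxE]
  refine ⟨H.image p, H.image q, disjoint_left.2 fun x hxp hxq => ?_, hcross hpE hp,
    hcross hqE hq, forall_mem_image.2 hp, forall_mem_image.2 hq⟩
  obtain ⟨E, hE, rfl⟩ := mem_image.1 hxp
  obtain ⟨E', hE', hpq'⟩ := mem_image.1 hxq
  obtain rfl := eq_of_hdeg_eq_one (hp E hE) hE hE' (hpE E hE) (hpq' ▸ hqE E' hE')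
  exact hpq E hE hpq'.symm

end ContainsCopy

section Homogeneous

variable {κ : Type*} [Fintype κ]

lemma IsHypertree.exists_coloring_of_crossCuts (hT : IsHypertree T)
    (hcard : ∀ A ∈ T, #A = Fintype.card κ) {P Q : Finset γ} (hPQ : Disjoint P Q)
    (hP : IsCrossCut T P) (hQ : IsCrossCut T Q) {a b : κ} (hab : a ≠ b) :
    ∃ ψ : γ → κ, ∀ A ∈ T, Set.InjOn ψ A ∧ ∀ x ∈ A, (ψ x = a → x ∈ P) ∧ (ψ x = b → x ∈ Q) := by
  classical
  have : Nonempty κ := ⟨a⟩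
  obtain ⟨ψ, hψ⟩ := (hT.image_sdiff (P ∪ Q)).exists_coloring (C := ({a, b}ᶜ : Finset κ)) (by
    refine forall_mem_image.2 fun A hA => ?_
    rw [card_compl, card_pair hab, card_sdiff, inter_comm, inter_union_distrib_left,
      card_union_of_disjoint (hPQ.mono inter_subset_right inter_subset_right), hP A hA, hQ A hA,
      hcard A hA])
  rw [forall_mem_image] at hψ
  refine ⟨fun x => if x ∈ P then a else if x ∈ Q then b else ψ x, fun A hA => ?_⟩
  have hψab {x} (hx : x ∈ A) (hxP : x ∉ P) (hxQ : x ∉ Q) : ψ x ≠ a ∧ ψ x ≠ b := by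
    simpa [and_comm] using (hψ hA).2 (show x ∈ ↑(A \ (P ∪ Q)) by simp [hx, hxP, hxQ])
  have hψinj {x y} (hx : x ∈ A ∧ x ∉ P ∧ x ∉ Q) (hy : y ∈ A ∧ y ∉ P ∧ y ∉ Q) (hxy : ψ x = ψ y) :
      x = y := (hψ hA).1 (by simpa using hx) (by simpa using hy) hxy
  have hP_eq {x y} := hP.eq_of_mem hA (x := x) (y := y)
  have hQ_eq {x y} := hQ.eq_of_mem hA (x := x) (y := y)
  constructor
  · intro x hx y hy hxy
    rw [mem_coe] at hx hy
    grind
  · grind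

variable [DecidableEq κ] {s : ℕ} {χ : V → κ} {J : Finset (Finset κ)}

/-- Give the two private vertices of each edge the colours `a` and `b`. The intersection of an
edge with other edges contains neither of them. -/
theorem IsFreePair.containsCopy {a b : κ} (hab : IsFreePair J a b) (h : IsHomogeneous s F χ J)
    (hne : F.Nonempty) (hT : IsHypertree T) (hs : #(hverts T) ≤ s)
    (hcard : ∀ A ∈ T, #A = Fintype.card κ) (hred : Reducible 2 T) : ContainsCopy F T := by
  obtain ⟨P, Q, hPQ, hP, hQ, hPdeg, hQdeg⟩ := hred.exists_crossCuts
  obtain ⟨ψ, hψ⟩ := hT.exists_coloring_of_crossCuts hcard hPQ hP hQ hab.1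
  refine hT.containsCopy h hne hs hcard (fun A hA => (hψ A hA).1) fun S hST _ A hA hAS => ?_
  have hprivate {x} (hx : x ∈ A ∩ hverts S) : hdeg T x ≠ 1 := fun hdeg =>
    notMem_hverts_of_hdeg_eq_one hdeg hA (mem_inter.1 hx).1 hST
      (fun hAS' => hAS (subset_hverts hAS')) (mem_inter.1 hx).2
  refine hab.2 _ (fun ha => ?_) fun hb => ?_
  · obtain ⟨x, hx, hxa⟩ := mem_image.1 ha
    exact hprivate hx (hPdeg x (((hψ A hA).2 x (mem_inter.1 hx).1).1 hxa))
  · obtain ⟨x, hx, hxb⟩ := mem_image.1 hb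
    exact hprivate hx (hQdeg x (((hψ A hA).2 x (mem_inter.1 hx).1).2 hxb))

lemma IsStarCenter.containsCopy {c : κ} (hc : IsStarCenter J c) (h : IsHomogeneous s F χ J)
    (hne : F.Nonempty) (hT : IsHypertree T) (hs : #(hverts T) ≤ s)
    (hcard : ∀ A ∈ T, #A = Fintype.card κ) {y : γ} (hy : ∀ A ∈ T, y ∈ A) : ContainsCopy F T := by
  have : Nonempty κ := ⟨c⟩
  obtain ⟨ψ₀, hψ₀⟩ := hT.exists_coloring (C := (univ : Finset κ)) fun A hA => (hcard A hA).le
  have hψ : ∀ A ∈ T, Set.InjOn (Equiv.swap (ψ₀ y) c ∘ ψ₀) A := fun A hA =>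
    (Equiv.injective _).comp_injOn (hψ₀ A hA).1
  refine hT.containsCopy h hne hs hcard hψ fun S hST ⟨B, hB⟩ A hA hAS => hc.mem _ ?_ ?_
  · refine fun huniv => hAS (inter_eq_left.1 (eq_of_subset_of_card_le inter_subset_left ?_))
    rw [hcard A hA, ← card_univ, ← huniv]
    exact card_image_le
  · exact mem_image.2 ⟨y, mem_inter.2 ⟨hy A hA, subset_hverts hB (hy B (hST hB))⟩, by simp⟩

theorem IsStarCenter.containsCopy_of_crossCut {c : κ} (hc : IsStarCenter J c)
    (h : IsHomogeneous s F χ J) (hne : F.Nonempty) (hT : IsHypertree T) (hs : #(hverts T) ≤ s)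
    (hcard : ∀ A ∈ T, #A = Fintype.card κ) [DecidableEq α] {H : Finset (Finset α)}
    (hTH : ContainsCopy T H) {S : Finset α} (hS : IsCrossCut H S) (hS1 : #S = 1) :
    ContainsCopy F H := by
  obtain ⟨x, rfl⟩ := card_eq_one.1 hS1
  obtain ⟨y, hy⟩ := hTH.exists_star (x := x) fun E hE => by
    obtain ⟨x', hx', hx⟩ := hS.exists_mem hE
    exact mem_singleton.1 hx ▸ hx'
  exact (hc.containsCopy h hne (hT.filter_mem y)
    ((card_le_card (sup_mono (filter_subset _ _))).trans hs)
    (fun A hA => hcard A (mem_filter.1 hA).1) fun A hA => (mem_filter.1 hA).2).trans hy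

end Homogeneous

section CommonLink

variable [Fintype V]

/-- The common link of the vertices in `W`: the sets that every vertex of `W` extends to a new
member of `F`. -/
def commonLink (F : Finset (Finset V)) (W : Finset V) : Finset (Finset V) :=
  {B | ∀ v ∈ W, B ∈ F.memberSubfamily v}

lemma mem_commonLink {W B : Finset V} :
    B ∈ commonLink F W ↔ ∀ v ∈ W, insert v B ∈ F ∧ v ∉ B := by
  simp [commonLink]

variable [DecidableEq α] {H : Finset (Finset α)} {S : Finset α}

lemma IsCrossCut.containsCopy_of_commonLink (hS : IsCrossCut H S) {W : Finset V}
    (hSW : #S ≤ #W) {f : α → V} (hf : Set.InjOn f ↑(hverts H \ S))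
    (hfH : ∀ E ∈ H, (E \ S).image f ∈ commonLink F W) : ContainsCopy F H := by
  rcases H.eq_empty_or_nonempty with rfl | ⟨E₀, hE₀⟩
  · exact ⟨f, by simp, by simp⟩
  have : Nonempty V := ⟨f (hS.exists_mem hE₀).choose⟩
  obtain ⟨w, hwW, hw⟩ := S.finite_toSet.exists_injOn_of_encard_le (t := (W : Set V)) (by
    rwa [Set.encard_coe_eq_coe_finsetCard, Set.encard_coe_eq_coe_finsetCard, Nat.cast_le])
  have hwf {x y} (hx : x ∈ S) (hy : y ∈ hverts H) (hyS : y ∉ S) : w x ≠ f y := by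
    obtain ⟨E, hE, hyE⟩ := mem_hverts.1 hy
    intro hxy
    exact (mem_commonLink.1 (hfH E hE) (w x) (hwW hx)).2
      (hxy ▸ mem_image_of_mem f (mem_sdiff.2 ⟨hyE, hyS⟩))
  refine ⟨fun x => if x ∈ S then w x else f x, fun x hx y hy hxy => ?_, fun E hE => ?_⟩
  · change x ∈ hverts H at hx
    change y ∈ hverts H at hy
    by_cases hxS : x ∈ S <;> by_cases hyS : y ∈ S <;>
      simp only [hxS, hyS, if_true, if_false] at hxy
    · exact hw hxS hyS hxy
    · exact absurd hxy (hwf hxS hy hyS)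
    · exact absurd hxy.symm (hwf hyS hx hxS)
    · exact hf (mem_sdiff.2 ⟨hx, hxS⟩) (mem_sdiff.2 ⟨hy, hyS⟩) hxy
  · obtain ⟨x, hx⟩ := card_eq_one.1 (hS E hE)
    have hxS : x ∈ S := (mem_inter.1 (hx ▸ mem_singleton_self x)).2
    have himage : E.image (fun x => if x ∈ S then w x else f x)
        = insert (w x) ((E \ S).image f) := by
      conv_lhs =>
        rw [← sdiff_union_inter E S, hx, union_comm, ← insert_eq, image_insert, if_pos hxS]
      exact congrArg _ (image_congr fun y hy => if_neg (mem_sdiff.1 hy).2)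
    rw [himage]
    exact (mem_commonLink.1 (hfH E hE) (w x) (hwW hxS)).1

/-- Delete from each edge of `T` a vertex of the cross-cut of `H`, or a private vertex if the
edge is not in `H`. -/
lemma Reducible.exists_sdiff_eq (hred : Reducible 2 T) {k : ℕ} (hcard : ∀ A ∈ T, #A = k + 1)
    {H : Finset (Finset γ)} (hHT : H ⊆ T) {S : Finset γ} (hS : IsCrossCut H S) :
    ∃ X, (∀ A ∈ H, A \ X = A \ S) ∧ ∀ A ∈ T, #(A \ X) ≤ k := by
  obtain ⟨P, -, -, hP, -, hPdeg, -⟩ := hred.exists_crossCuts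
  have hHX : ∀ A ∈ H, A \ (S ∪ P \ hverts H) = A \ S := fun A hA => by
    have := subset_hverts hA
    grind
  refine ⟨S ∪ P \ hverts H, hHX, fun A hA => ?_⟩
  by_cases hAH : A ∈ H
  · rw [hHX A hAH, hS.card_sdiff hAH, hcard A hA, Nat.add_sub_cancel]
  obtain ⟨x, hxA, hxP⟩ := hP.exists_mem hA
  have hxX : x ∈ S ∪ P \ hverts H := mem_union_right _ (mem_sdiff.2
    ⟨hxP, notMem_hverts_of_hdeg_eq_one (hPdeg x hxP) hA hxA hHT hAH⟩)
  refine Nat.le_of_lt_succ ((card_lt_card ?_).trans_eq (hcard A hA))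
  exact (ssubset_iff_of_subset sdiff_subset).2 ⟨x, hxA, fun hx => (mem_sdiff.1 hx).2 hxX⟩

variable {κ : Type*} [Fintype κ] [Nonempty κ] [DecidableEq κ] {s : ℕ} {χ : V → κ}
  {J : Finset (Finset κ)} {L : Finset (Finset V)}

lemma IsHomogeneous.containsCopy_of_commonLink (h : IsHomogeneous s L χ J) (hne : L.Nonempty)
    (hJ : ∀ K ≠ univ, K ∈ J) {W : Finset V} (hLF : L ⊆ commonLink F W) (hT : IsHypertree T)
    (hs : #(hverts T) ≤ s) (hcard : ∀ A ∈ T, #A = Fintype.card κ + 1) (hred : Reducible 2 T)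
    {H : Finset (Finset γ)} (hHT : H ⊆ T) {S : Finset γ} (hS : IsCrossCut H S) (hSW : #S ≤ #W) :
    ContainsCopy F H := by
  obtain ⟨X, hHX, hTX⟩ := hred.exists_sdiff_eq hcard hHT hS
  have hcardX : ∀ A ∈ T.image (· \ X), #A ≤ Fintype.card κ := forall_mem_image.2 hTX
  obtain ⟨ψ, hψ⟩ := (hT.image_sdiff X).exists_coloring (C := (univ : Finset κ)) hcardX
  obtain ⟨f, hf, -, hfT⟩ := (hT.image_sdiff X).exists_embedding h hne
    (hverts_image_sdiff T X ▸ (card_le_card sdiff_subset).trans hs) (fun A hA => (hψ A hA).1) (by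
      refine fun R _ _ A hA hAR => hJ _ fun huniv => hAR (inter_eq_left.1
        (eq_of_subset_of_card_le inter_subset_left ?_))
      calc #A ≤ Fintype.card κ := hcardX A hA
        _ = #((A ∩ hverts R).image ψ) := by rw [huniv, card_univ]
        _ ≤ #(A ∩ hverts R) := card_image_le)
  have hfH : Set.InjOn f ↑(hverts H \ S) := by
    refine hf.mono (coe_subset.2 fun x hx => ?_)
    obtain ⟨hxH, hxS⟩ := mem_sdiff.1 hx
    obtain ⟨A, hA, hxA⟩ := mem_hverts.1 hxH
    exact subset_hverts (mem_image_of_mem _ (hHT hA)) (hHX A hA ▸ mem_sdiff.2 ⟨hxA, hxS⟩)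
  refine hS.containsCopy_of_commonLink hSW hfH fun A hA => ?_
  obtain ⟨E, hE, hAE⟩ := hfT _ (mem_image_of_mem _ (hHT hA))
  rw [hHX A hA] at hAE
  rw [eq_of_subset_of_card_le hAE]
  · exact hLF hE
  · rw [card_image_of_injOn (hfH.mono (coe_subset.2 (sdiff_subset_sdiff (subset_hverts hA)
      Subset.rfl))), hS.card_sdiff hA, hcard A (hHT hA), h.rainbow.card_eq hE, Nat.add_sub_cancel]

end CommonLink

section CommonLinkBound

variable [Fintype V] {r s : ℕ} [DecidableEq α] {H : Finset (Finset α)} {S : Finset α}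

theorem card_commonLink_le (hr : 2 ≤ r) (hT : IsRTree r T) (hred : Reducible 2 T)
    (hTs : #(hverts T) ≤ s) (hs : 2 * r ≤ s) (hTH : ContainsCopy T H) (hS : IsCrossCut H S)
    (hFr : ∀ E ∈ F, #E = r) (hFH : ¬ ContainsCopy F H) {W : Finset V} (hW : W.Nonempty)
    (hSW : #S ≤ #W) :
    #(commonLink F W) ≤ homogConst s (r - 1) * Fintype.card V ^ (r - 2) := by
  obtain ⟨v, hv⟩ := hW
  have hL : ∀ B ∈ commonLink F W, #B = Fintype.card (Fin (r - 1)) := fun B hB => by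
    obtain ⟨hBF, hvB⟩ := mem_commonLink.1 hB v hv
    rw [Fintype.card_fin, ← hFr _ hBF, card_insert_of_notMem hvB, Nat.add_sub_cancel]
  have : NeZero (r - 1) := ⟨by omega⟩
  obtain ⟨L, hLF, χ, J, hcard, hhom⟩ := exists_isHomogeneous s hL
  rw [Fintype.card_fin] at hcard
  refine hcard.trans (Nat.mul_le_mul_left _ ?_)
  by_contra! hlarge
  have hne : L.Nonempty := card_pos.1 (Nat.zero_lt_of_lt hlarge)
  have hproper (K : Finset (Fin (r - 1))) (hK : K ≠ univ) : K ∈ J :=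
    hhom.mem_of_pow_lt_card (by rw [Fintype.card_fin]; omega)
      (by rwa [Fintype.card_fin, Nat.sub_sub]) hK
  obtain ⟨H', hH'T, hH'H, S', hS'S, hS'⟩ := hTH.exists_subset hS
  exact hFH ((hhom.containsCopy_of_commonLink hne hproper hLF hT.isHypertree hTs
    (fun A hA => by rw [hT.card_eq hA, Fintype.card_fin]; omega) hred hH'T hS'
    (hS'S.trans hSW)).trans hH'H)

end CommonLinkBound

end Copies

/-! ### Vertices of large degree -/

section Degree

section CardSum

variable {ι δ : Type*} {W : Finset ι} {A : ι → Finset δ} {σ D : ℕ}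

lemma card_filter_le_card_filter_mem_le (U : Finset δ)
    (hD : ∀ W' ⊆ W, #W' = σ → ∀ X, (∀ i ∈ W', X ⊆ A i) → #X ≤ D) :
    #{x ∈ U | σ ≤ #{i ∈ W | x ∈ A i}} ≤ #W ^ σ * D := by
  classical
  calc #{x ∈ U | σ ≤ #{i ∈ W | x ∈ A i}}
      ≤ #((W.powersetCard σ).biUnion fun W' => {x ∈ U | ∀ i ∈ W', x ∈ A i}) := by
        refine card_le_card fun x hx => ?_
        obtain ⟨hxU, hx⟩ := mem_filter.1 hx
        obtain ⟨W', hW', hcard⟩ := exists_subset_card_eq hx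
        exact mem_biUnion.2 ⟨W', mem_powersetCard.2 ⟨hW'.trans (filter_subset _ _), hcard⟩,
          mem_filter.2 ⟨hxU, fun i hi => (mem_filter.1 (hW' hi)).2⟩⟩
    _ ≤ #(W.powersetCard σ) * D := card_biUnion_le_card_mul _ _ _ fun W' hW' =>
        hD W' (mem_powersetCard.1 hW').1 (mem_powersetCard.1 hW').2 _ fun i hi _ hx =>
          (mem_filter.1 hx).2 i hi
    _ ≤ #W ^ σ * D := by
        rw [card_powersetCard]
        gcongr
        exact Nat.choose_le_pow _ _

lemma sum_card_le_of_card_inter_le {U : Finset δ} (hA : ∀ i ∈ W, A i ⊆ U)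
    (hD : ∀ W' ⊆ W, #W' = σ → ∀ X, (∀ i ∈ W', X ⊆ A i) → #X ≤ D) :
    ∑ i ∈ W, #(A i) ≤ (σ - 1) * #U + #W ^ (σ + 1) * D := by
  have hpoint (x : δ) :
      #{i ∈ W | x ∈ A i} ≤ (σ - 1) + if σ ≤ #{i ∈ W | x ∈ A i} then #W else 0 := by
    have := card_filter_le W (x ∈ A ·)
    split_ifs <;> omega
  calc ∑ i ∈ W, #(A i) = ∑ i ∈ W, #{x ∈ U | x ∈ A i} := sum_congr rfl fun i hi => by
        rw [filter_mem_eq_inter, inter_eq_right.2 (hA i hi)]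
    _ = ∑ x ∈ U, #{i ∈ W | x ∈ A i} :=
        sum_card_bipartiteAbove_eq_sum_card_bipartiteBelow fun i x => x ∈ A i
    _ ≤ ∑ x ∈ U, ((σ - 1) + if σ ≤ #{i ∈ W | x ∈ A i} then #W else 0) :=
        sum_le_sum fun x _ => hpoint x
    _ = (σ - 1) * #U + #W * #{x ∈ U | σ ≤ #{i ∈ W | x ∈ A i}} := by
        rw [sum_add_distrib, ← sum_filter, sum_const, sum_const, smul_eq_mul, smul_eq_mul]
        ring
    _ ≤ (σ - 1) * #U + #W * (#W ^ σ * D) := by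
        gcongr
        exact card_filter_le_card_filter_mem_le U hD
    _ = _ := by ring

end CardSum

variable {V : Type*} [DecidableEq V] {F G : Finset (Finset V)} {r s : ℕ}

lemma card_memberSubfamily (F : Finset (Finset V)) (v : V) :
    #(F.memberSubfamily v) = hdeg F v :=
  card_image_of_injOn fun _ hE _ hE' h =>
    erase_injOn' v (mem_filter.1 hE).2 (mem_filter.1 hE').2 h

lemma hdeg_mono (hFG : F ⊆ G) (v : V) : hdeg F v ≤ hdeg G v :=
  card_le_card (filter_subset_filter _ hFG)

lemma hdeg_filter_disjoint_le {W : Finset V} {d : ℝ} (hd : 0 ≤ d)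
    (hW : ∀ v ∉ W, hdeg F v ≤ d) (v : V) : hdeg {E ∈ F | Disjoint E W} v ≤ d := by
  by_cases hv : v ∈ W
  · have hzero : hdeg {E ∈ F | Disjoint E W} v = 0 :=
      card_eq_zero.2 <| filter_eq_empty_iff.2 fun E hE hvE =>
        disjoint_left.1 (mem_filter.1 hE).2 hvE hv
    rwa [hzero, Nat.cast_zero]
  · exact (Nat.cast_le.2 (hdeg_mono (filter_subset _ F) v)).trans (hW v hv)

lemma card_filter_not_disjoint_le_sum_hdeg (F : Finset (Finset V)) (W : Finset V) :
    #{E ∈ F | ¬ Disjoint E W} ≤ ∑ v ∈ W, hdeg F v := by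
  refine (card_le_card fun E hE => ?_).trans card_biUnion_le
  obtain ⟨hEF, hEW⟩ := mem_filter.1 hE
  obtain ⟨v, hvE, hvW⟩ := not_disjoint_iff.1 hEW
  exact mem_biUnion.2 ⟨v, hvW, mem_filter.2 ⟨hEF, hvE⟩⟩

variable [Fintype V]

lemma sum_hdeg (hF : ∀ E ∈ F, #E = r) : ∑ v, hdeg F v = r * #F := calc
  ∑ v, hdeg F v = ∑ E ∈ F, #{v | v ∈ E} :=
    sum_card_bipartiteAbove_eq_sum_card_bipartiteBelow fun v E => v ∈ E
  _ = #F * r := sum_const_nat fun E hE => by rw [filter_univ_mem, hF E hE]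
  _ = r * #F := mul_comm _ _

lemma card_filter_lt_hdeg_mul_le (hF : ∀ E ∈ F, #E = r) (d : ℝ) :
    #{v | d < hdeg F v} * d ≤ r * #F := calc
  #{v | d < hdeg F v} * d = ∑ v with d < hdeg F v, d := by rw [sum_const, nsmul_eq_mul]
  _ ≤ ∑ v with d < hdeg F v, (hdeg F v : ℝ) := sum_le_sum fun v hv => (mem_filter.1 hv).2.le
  _ ≤ ∑ v, (hdeg F v : ℝ) := sum_le_univ_sum_of_nonneg fun v => Nat.cast_nonneg _
  _ = r * #F := mod_cast sum_hdeg hF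

theorem card_filter_not_disjoint_le {γ α : Type*} [DecidableEq γ] [DecidableEq α]
    {T : Finset (Finset γ)} {H : Finset (Finset α)} {S : Finset α} (hr : 2 ≤ r)
    (hT : IsRTree r T) (hred : Reducible 2 T) (hTs : #(hverts T) ≤ s) (hs : 2 * r ≤ s)
    (hTH : ContainsCopy T H) (hS : IsCrossCut H S) (hS1 : 1 ≤ #S) (hFr : ∀ E ∈ F, #E = r)
    (hFH : ¬ ContainsCopy F H) (W : Finset V) :
    #{E ∈ F | ¬ Disjoint E W} ≤ (#S - 1) * (Fintype.card V).choose (r - 1) +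
      #W ^ (#S + 1) * (homogConst s (r - 1) * Fintype.card V ^ (r - 2)) := by
  have hlink : ∀ v ∈ W, F.memberSubfamily v ⊆ powersetCard (r - 1) univ := fun v _ B hB => by
    obtain ⟨hBF, hvB⟩ := mem_memberSubfamily.1 hB
    rw [mem_powersetCard_univ, ← hFr _ hBF, card_insert_of_notMem hvB, Nat.add_sub_cancel]
  have hcommon : ∀ W' ⊆ W, #W' = #S → ∀ X, (∀ v ∈ W', X ⊆ F.memberSubfamily v) →
      #X ≤ homogConst s (r - 1) * Fintype.card V ^ (r - 2) := fun W' _ hW' X hX =>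
    (card_le_card fun B hB => mem_filter.2 ⟨mem_univ B, fun v hv => hX v hv hB⟩).trans <|
      card_commonLink_le hr hT hred hTs hs hTH hS hFr hFH (card_pos.1 (hW' ▸ hS1)) hW'.ge
  have hsum := sum_card_le_of_card_inter_le hlink hcommon
  simp only [card_memberSubfamily, card_powersetCard, card_univ] at hsum
  exact (card_filter_not_disjoint_le_sum_hdeg F W).trans hsum

end Degree

/-! ### Families of bounded degree -/

section BoundedDegree

open scoped FinsetFamily

lemma exists_choose_le_le_choose_succ {n t N : ℕ} (hN : N ≠ 0) (htn : t ≤ n)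
    (hNn : N ≤ n.choose t) :
    ∃ k, t ≤ k ∧ k ≤ n ∧ k.choose t ≤ N ∧ N ≤ (k + 1).choose t := by
  induction n, htn using Nat.le_induction with
  | base =>
    refine ⟨t, le_rfl, le_rfl, ?_, hNn.trans (Nat.choose_le_choose _ t.le_succ)⟩
    rw [Nat.choose_self]
    exact Nat.one_le_iff_ne_zero.2 hN
  | succ n htn ih =>
    rcases le_total N (n.choose t) with h | h
    · obtain ⟨k, htk, hkn, hk⟩ := ih h
      exact ⟨k, htk, hkn.trans n.le_succ, hk⟩
    · exact ⟨n, htn, n.le_succ, h, hNn⟩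

lemma choose_succ_add_two_le {k u : ℕ} (hk : k ≠ 0) :
    (k + 1).choose (u + 2) ≤ 2 * k ^ 2 * k.choose u := by
  have hstep (m v : ℕ) : m.choose (v + 1) ≤ m * m.choose v := calc
    m.choose (v + 1) ≤ m.choose (v + 1) * (v + 1) := Nat.le_mul_of_pos_right _ v.succ_pos
    _ = m.choose v * (m - v) := Nat.choose_succ_right_eq m v
    _ ≤ m * m.choose v := by
      rw [mul_comm]
      gcongr
      exact Nat.sub_le _ _
  calc (k + 1).choose (u + 2) ≤ (k + 1).choose (u + 2) * (u + 2) :=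
        Nat.le_mul_of_pos_right _ (u + 1).succ_pos
    _ = (k + 1) * k.choose (u + 1) := (Nat.add_one_mul_choose_eq k (u + 1)).symm
    _ ≤ (k + k) * (k * k.choose u) :=
        Nat.mul_le_mul (by omega) (hstep k u)
    _ = 2 * k ^ 2 * k.choose u := by ring

lemma pow_le_mul_choose {k t : ℕ} (htk : t ≤ k) : k ^ t ≤ (t ^ 2) ^ t * k.choose t := by
  rcases t.eq_zero_or_pos with rfl | ht
  · simp
  have hbase : k ≤ t * (k + 1 - t) := by
    obtain ⟨d, rfl⟩ := Nat.exists_eq_add_of_le htk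
    rw [add_assoc, Nat.add_sub_cancel_left]
    nlinarith
  calc k ^ t ≤ (t * (k + 1 - t)) ^ t := Nat.pow_le_pow_left hbase t
    _ = t ^ t * (k + 1 - t) ^ t := mul_pow _ _ _
    _ ≤ t ^ t * (t.factorial * k.choose t) := by
      rw [← Nat.descFactorial_eq_factorial_mul_choose]
      gcongr
      exact Nat.pow_sub_le_descFactorial _ _
    _ ≤ t ^ t * (t ^ t * k.choose t) := by
      gcongr
      exact Nat.factorial_le_pow t
    _ = (t ^ 2) ^ t * k.choose t := by ring

variable {n : ℕ}

/-- By Kruskal–Katona, a family of `k.choose t` sets has a double shadow of size at least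
`k.choose (t - 2)`, smaller by a factor of order `k ^ 2`, while `k` is of order at most `M`. -/
theorem card_le_mul_card_shadow_shadow {t : ℕ} (ht : 2 ≤ t) {A : Finset (Finset (Fin n))}
    (hA : (A : Set (Finset (Fin n))).Sized t) {M : ℝ} (hM : 0 ≤ M) (hAM : #A ≤ M ^ t) :
    (#A : ℝ) ≤ 2 * t ^ 4 * M ^ 2 * #(∂^[2] A) := by
  rcases A.eq_empty_or_nonempty with rfl | hne
  · simp only [card_empty, Nat.cast_zero]
    positivity
  have hAn : #A ≤ n.choose t := by simpa using hA.card_le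
  have htn : t ≤ n := by
    by_contra! hlt
    exact hne.card_pos.ne' (by simpa [Nat.choose_eq_zero_of_lt hlt] using hAn)
  obtain ⟨k, htk, hkn, hkA, hAk⟩ := exists_choose_le_le_choose_succ hne.card_pos.ne' htn hAn
  have hshadow : #A ≤ 2 * k ^ 2 * #(∂^[2] A) := by
    obtain ⟨u, rfl⟩ := Nat.exists_eq_add_of_le' ht
    calc #A ≤ (k + 1).choose (u + 2) := hAk
      _ ≤ 2 * k ^ 2 * k.choose u := choose_succ_add_two_le (by omega)
      _ ≤ 2 * k ^ 2 * #(∂^[2] A) := by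
        gcongr
        exact kruskal_katona_lovasz_form ht htk hkn hA hkA
  have hkM : k ≤ t ^ 2 * M := by
    refine le_of_pow_le_pow_left₀ (n := t) (by omega) (by positivity) ?_
    calc (k : ℝ) ^ t ≤ (t ^ 2) ^ t * #A := by
          exact_mod_cast (pow_le_mul_choose htk).trans (Nat.mul_le_mul_left _ hkA)
      _ ≤ (t ^ 2) ^ t * M ^ t := by gcongr
      _ = (t ^ 2 * M) ^ t := (mul_pow _ _ _).symm
  calc (#A : ℝ) ≤ 2 * k ^ 2 * #(∂^[2] A) := mod_cast hshadow
    _ ≤ 2 * (t ^ 2 * M) ^ 2 * #(∂^[2] A) := by gcongr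
    _ = 2 * t ^ 4 * M ^ 2 * #(∂^[2] A) := by ring

lemma mem_shadow_shadow_memberSubfamily {V : Type*} [DecidableEq V] {F : Finset (Finset V)}
    {r : ℕ} (hF : ∀ E ∈ F, #E = r) {v : V} {A : Finset V} (hA : A ∈ ∂^[2] (F.memberSubfamily v)) :
    #A + 3 = r ∧ ∃ E ∈ F, v ∈ E ∧ A ⊆ E := by
  obtain ⟨B, hB, hAB, hcard⟩ := mem_shadow_iterate_iff_exists_mem_card_add.1 hA
  obtain ⟨hBF, hvB⟩ := mem_memberSubfamily.1 hB
  refine ⟨?_, _, hBF, mem_insert_self v B, hAB.trans (subset_insert v B)⟩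
  rw [← hF _ hBF, card_insert_of_notMem hvB, hcard]

lemma IsRainbow.sum_hdeg {V κ : Type*} [Fintype V] [DecidableEq V] [DecidableEq κ]
    {F : Finset (Finset V)} {χ : V → κ} (h : IsRainbow F χ) (c : κ) :
    ∑ v with χ v = c, hdeg F v = #F := calc
  ∑ v with χ v = c, hdeg F v = ∑ E ∈ F, #{v ∈ {v | χ v = c} | v ∈ E} :=
    sum_card_bipartiteAbove_eq_sum_card_bipartiteBelow fun v E => v ∈ E
  _ = #F * 1 := sum_const_nat fun E hE => by
    obtain ⟨v, hv, hvc⟩ := h.exists_color hE c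
    refine card_eq_one.2 ⟨v, ext fun w => ?_⟩
    simp only [mem_filter, mem_univ, true_and, mem_singleton]
    refine ⟨fun ⟨hwc, hw⟩ => (h E hE).injOn hw hv (hwc.trans hvc.symm), ?_⟩
    rintro rfl
    exact ⟨hvc, hv⟩
  _ = #F := mul_one _

namespace IsHomogeneous

variable {s : ℕ} {κ : Type*} [Fintype κ] [DecidableEq κ] {J : Finset (Finset κ)} {c : κ}

lemma disjoint_shadow_shadow {V : Type*} [DecidableEq V] {F : Finset (Finset V)} {χ : V → κ}
    (h : IsHomogeneous s F χ J) (hc : IsStarCenter J c) {v w : V} (hv : χ v = c) (hw : χ w = c)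
    (hvw : v ≠ w) : Disjoint (∂^[2] (F.memberSubfamily v)) (∂^[2] (F.memberSubfamily w)) := by
  refine disjoint_left.2 fun A hAv hAw => ?_
  have hF : ∀ E ∈ F, #E = Fintype.card κ := fun E hE => h.rainbow.card_eq hE
  obtain ⟨hA, E, hE, hvE, hAE⟩ := mem_shadow_shadow_memberSubfamily hF hAv
  obtain ⟨-, E', hE', hwE', hAE'⟩ := mem_shadow_shadow_memberSubfamily hF hAw
  have hcolor {x} (hx : x ∈ E) (hxc : χ x = c) : x = v :=
    (h.rainbow E hE).injOn hx hvE (hxc.trans hv.symm)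
  have hcolor' {x} (hx : x ∈ E') (hxc : χ x = c) : x = w :=
    (h.rainbow E' hE').injOn hx hwE' (hxc.trans hw.symm)
  have hEE' : E ≠ E' := by
    rintro rfl
    exact hvw (hcolor hwE' hw).symm
  have hcK : c ∉ (E ∩ E').image χ := fun hcm => by
    obtain ⟨x, hx, hxc⟩ := mem_image.1 hcm
    exact hvw ((hcolor (mem_inter.1 hx).1 hxc).symm.trans (hcolor' (mem_inter.1 hx).2 hxc))
  have hlt := hc.card_lt _ (h.inter_mem E hE E' hE' hEE') hcK
  rw [card_image_of_injOn ((h.rainbow E hE).injOn.mono (coe_subset.2 inter_subset_left))] at hlt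
  have := card_le_card (subset_inter hAE hAE')
  omega

lemma sum_card_shadow_shadow_le {V : Type*} [Fintype V] [DecidableEq V] {F : Finset (Finset V)}
    {χ : V → κ} (h : IsHomogeneous s F χ J) (hc : IsStarCenter J c) :
    ∑ v with χ v = c, #(∂^[2] (F.memberSubfamily v)) ≤
      Fintype.card V ^ (Fintype.card κ - 3) := by
  have hdisj : ((univ.filter (χ · = c) : Finset V) : Set V).PairwiseDisjoint
      fun v => ∂^[2] (F.memberSubfamily v) := fun v hv w hw hvw =>
    h.disjoint_shadow_shadow hc (by simpa using hv) (by simpa using hw) hvw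
  rw [← card_biUnion hdisj]
  refine (card_le_card (t := powersetCard (Fintype.card κ - 3) univ) fun A hA => ?_).trans ?_
  · obtain ⟨v, -, hA⟩ := mem_biUnion.1 hA
    rw [mem_powersetCard_univ]
    have := (mem_shadow_shadow_memberSubfamily (fun E hE => h.rainbow.card_eq hE) hA).1
    omega
  · rw [card_powersetCard, card_univ]
    exact Nat.choose_le_pow _ _

theorem card_le_of_isStarCenter (hκ : 3 ≤ Fintype.card κ) {F : Finset (Finset (Fin n))}
    {χ : Fin n → κ} (h : IsHomogeneous s F χ J) (hc : IsStarCenter J c) {M : ℝ} (hM : 0 ≤ M)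
    (hdeg_le : ∀ v, hdeg F v ≤ M ^ (Fintype.card κ - 1)) :
    (#F : ℝ) ≤ 2 * (Fintype.card κ - 1 : ℕ) ^ 4 * M ^ 2 * n ^ (Fintype.card κ - 3) := by
  set t := Fintype.card κ - 1 with ht
  have hsized (v : Fin n) : (F.memberSubfamily v : Set (Finset (Fin n))).Sized t := fun B hB => by
    obtain ⟨hBF, hvB⟩ := mem_memberSubfamily.1 (mem_coe.1 hB)
    rw [ht, ← h.rainbow.card_eq hBF, card_insert_of_notMem hvB, Nat.add_sub_cancel]
  have hlink (v : Fin n) :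
      (#(F.memberSubfamily v) : ℝ) ≤ 2 * t ^ 4 * M ^ 2 * #(∂^[2] (F.memberSubfamily v)) :=
    card_le_mul_card_shadow_shadow (by omega) (hsized v) hM
      (by rw [card_memberSubfamily]; exact hdeg_le v)
  have hshadow : ∑ v with χ v = c, (#(∂^[2] (F.memberSubfamily v)) : ℝ) ≤
      n ^ (Fintype.card κ - 3) := by
    exact_mod_cast Fintype.card_fin n ▸ h.sum_card_shadow_shadow_le hc
  calc (#F : ℝ) = ∑ v with χ v = c, (#(F.memberSubfamily v) : ℝ) := by
        simp only [card_memberSubfamily]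
        exact_mod_cast (h.rainbow.sum_hdeg c).symm
    _ ≤ ∑ v with χ v = c, 2 * t ^ 4 * M ^ 2 * #(∂^[2] (F.memberSubfamily v)) :=
        sum_le_sum fun v _ => hlink v
    _ = 2 * t ^ 4 * M ^ 2 * ∑ v with χ v = c, (#(∂^[2] (F.memberSubfamily v)) : ℝ) :=
        (mul_sum _ _ _).symm
    _ ≤ 2 * t ^ 4 * M ^ 2 * n ^ (Fintype.card κ - 3) := by gcongr

end IsHomogeneous

end BoundedDegree

/-! ### Turán numbers -/

section Turan

variable {γ α : Type*} [DecidableEq γ] [DecidableEq α] {T : Finset (Finset γ)}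
  {H : Finset (Finset α)} {S : Finset α} {r s : ℕ}

section

variable {V : Type*} [Fintype V] [DecidableEq V] {F : Finset (Finset V)}

/-- In a family with more than `card V ^ (r - 1)` members all proper colour sets would be kernels,
so that `T` could be embedded. -/
theorem card_le_pow_sub_one (hr : 2 ≤ r) (hT : IsRTree r T) (hred : Reducible 2 T)
    (hTs : #(hverts T) ≤ s) (hs : 2 * r ≤ s) (hFr : ∀ E ∈ F, #E = r)
    (hFT : ¬ ContainsCopy F T) : #F ≤ homogConst s r * Fintype.card V ^ (r - 1) := by
  have hr' : Fintype.card (Fin r) = r := Fintype.card_fin r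
  have : NeZero r := ⟨by omega⟩
  obtain ⟨F', hF', χ, J, hcard, h⟩ :=
    exists_isHomogeneous (κ := Fin r) s fun E hE => (hFr E hE).trans hr'.symm
  rw [hr'] at hcard
  refine hcard.trans (Nat.mul_le_mul_left _ ?_)
  by_contra! hlarge
  have hproper (K : Finset (Fin r)) (hK : K ≠ univ) : K ∈ J :=
    h.mem_of_pow_lt_card (by rwa [hr']) (by rwa [hr']) hK
  have hab : IsFreePair J (⟨0, by omega⟩ : Fin r) ⟨1, by omega⟩ :=
    ⟨by simp, fun K hK _ => hproper K fun huniv => hK (huniv ▸ mem_univ _)⟩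
  exact hFT ((hab.containsCopy h (card_pos.1 (Nat.zero_lt_of_lt hlarge)) hT.isHypertree hTs
    (fun A hA => (hT.card_eq hA).trans hr'.symm) hred).mono hF')

lemma exists_isHomogeneous_of_not_containsCopy (hr : 3 ≤ r) (hT : IsRTree r T)
    (hred : Reducible 2 T) (hTs : #(hverts T) ≤ s) (hs : 2 * r ≤ s) (hFr : ∀ E ∈ F, #E = r)
    (hFT : ¬ ContainsCopy F T) :
    ∃ F' ⊆ F, ∃ (χ : V → Fin r) (J : Finset (Finset (Fin r))),
      #F ≤ homogConst s r * #F' ∧ IsHomogeneous s F' χ J ∧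
      (#F' ≤ Fintype.card V ^ (r - 2) ∨ F'.Nonempty ∧ ∃ c, IsStarCenter J c) := by
  have : NeZero r := ⟨by omega⟩
  obtain ⟨F', hF', χ, J, hcard, h⟩ :=
    exists_isHomogeneous (κ := Fin r) s fun E hE => (hFr E hE).trans (Fintype.card_fin r).symm
  rw [Fintype.card_fin] at hcard
  refine ⟨F', hF', χ, J, hcard, h, ?_⟩
  rcases F'.eq_empty_or_nonempty with rfl | hne
  · exact .inl (by simp)
  have hfree (a b : Fin r) : ¬ IsFreePair J a b := fun hab =>
    hFT ((hab.containsCopy h hne hT.isHypertree hTs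
      (fun A hA => (hT.card_eq hA).trans (Fintype.card_fin r).symm) hred).mono hF')
  have := h.card_le_pow_or_exists_isStarCenter (by simpa using hr) (by simpa using hs) hne hfree
  rw [Fintype.card_fin] at this
  exact this.imp_right fun hc => ⟨hne, hc⟩

theorem card_le_pow_sub_two (hr : 3 ≤ r) (hT : IsRTree r T)
    (hred : Reducible 2 T) (hTs : #(hverts T) ≤ s) (hs : 2 * r ≤ s) (hTH : ContainsCopy T H)
    (hS : IsCrossCut H S) (hS1 : #S = 1) (hFr : ∀ E ∈ F, #E = r)
    (hFH : ¬ ContainsCopy F H) : #F ≤ homogConst s r * Fintype.card V ^ (r - 2) := by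
  obtain ⟨F', hsub, χ, J, hcard, h, hF' | ⟨hne, c, hc⟩⟩ :=
    exists_isHomogeneous_of_not_containsCopy hr hT hred hTs hs hFr (hFH <| ·.trans hTH)
  · exact hcard.trans (Nat.mul_le_mul_left _ hF')
  · exact absurd ((hc.containsCopy_of_crossCut h hne hT.isHypertree hTs
      (fun A hA => (hT.card_eq hA).trans (Fintype.card_fin r).symm) hTH hS hS1).mono hsub) hFH

end

variable {n : ℕ} {F : Finset (Finset (Fin n))}

theorem card_le_of_hdeg_le (hr : 3 ≤ r) (hT : IsRTree r T)
    (hred : Reducible 2 T) (hTs : #(hverts T) ≤ s) (hs : 2 * r ≤ s) (hFr : ∀ E ∈ F, #E = r)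
    (hFT : ¬ ContainsCopy F T) {d : ℝ} (hd : 0 ≤ d) (hdeg_le : ∀ v, hdeg F v ≤ d ^ (r - 1)) :
    (#F : ℝ) ≤
      homogConst s r * (n ^ (r - 2) + 2 * (r - 1 : ℕ) ^ 4 * d ^ 2 * n ^ (r - 3)) := by
  obtain ⟨F', hsub, χ, J, hcard, h, hF'⟩ :=
    exists_isHomogeneous_of_not_containsCopy hr hT hred hTs hs hFr hFT
  have hF' : (#F' : ℝ) ≤ n ^ (r - 2) + 2 * (r - 1 : ℕ) ^ 4 * d ^ 2 * n ^ (r - 3) := by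
    rcases hF' with hF' | ⟨-, c, hc⟩
    · rw [Fintype.card_fin] at hF'
      exact le_add_of_le_of_nonneg (mod_cast hF') (by positivity)
    · have hstar := h.card_le_of_isStarCenter (by simpa using hr) hc hd fun v => by
        rw [Fintype.card_fin]
        exact (Nat.cast_le.2 (hdeg_mono hsub v)).trans (hdeg_le v)
      rw [Fintype.card_fin] at hstar
      exact le_add_of_nonneg_of_le (by positivity) hstar
  calc (#F : ℝ) ≤ homogConst s r * #F' := mod_cast hcard
    _ ≤ _ := by gcongr

lemma card_filter_lt_hdeg_le (hFr : ∀ E ∈ F, #E = r) (hn : n ≠ 0) {B y : ℝ}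
    (hF : #F ≤ B * n ^ (r - 1)) (hy : 0 < y) :
    #{v | (n / y) ^ (r - 1) < hdeg F v} ≤ r * B * y ^ (r - 1) := by
  refine le_of_mul_le_mul_right ?_ (by positivity : 0 < (n / y) ^ (r - 1))
  calc #{v | (n / y) ^ (r - 1) < hdeg F v} * (n / y) ^ (r - 1) ≤ r * #F :=
        card_filter_lt_hdeg_mul_le hFr _
    _ ≤ r * (B * n ^ (r - 1)) := by gcongr
    _ = r * B * y ^ (r - 1) * (n / y) ^ (r - 1) := by
        rw [div_pow]
        field_simp

lemma card_filter_not_disjoint_le_of_card_le (hr : 2 ≤ r) (hT : IsRTree r T)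
    (hred : Reducible 2 T) (hTs : #(hverts T) ≤ s) (hs : 2 * r ≤ s) (hTH : ContainsCopy T H)
    (hS : IsCrossCut H S) (hS1 : 1 ≤ #S) (hFr : ∀ E ∈ F, #E = r) (hFH : ¬ ContainsCopy F H)
    {B y : ℝ} (hy : 0 < y) (hyn : y ^ ((r - 1) * (#S + 1) + 2) ≤ n)
    {W : Finset (Fin n)} (hW : #W ≤ B * y ^ (r - 1)) :
    (#{E ∈ F | ¬ Disjoint E W} : ℝ) ≤ (#S - 1) * n.choose (r - 1) +
      B ^ (#S + 1) * homogConst s (r - 1) * (n ^ (r - 1) / y ^ 2) := by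
  have hB : 0 ≤ B := nonneg_of_mul_nonneg_left ((Nat.cast_nonneg _).trans hW) (by positivity)
  have hmeet := card_filter_not_disjoint_le hr hT hred hTs hs hTH hS hS1 hFr hFH W
  rw [Fintype.card_fin] at hmeet
  have hpow : (y ^ (r - 1)) ^ (#S + 1) * n ^ (r - 2) ≤ n ^ (r - 1) / y ^ 2 := by
    rw [le_div_iff₀ (by positivity)]
    calc (y ^ (r - 1)) ^ (#S + 1) * n ^ (r - 2) * y ^ 2
        = y ^ ((r - 1) * (#S + 1) + 2) * n ^ (r - 2) := by ring
      _ ≤ n * n ^ (r - 2) := by gcongr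
      _ = n ^ (r - 1) := by rw [← pow_succ', show r - 2 + 1 = r - 1 by omega]
  calc (#{E ∈ F | ¬ Disjoint E W} : ℝ)
      ≤ (#S - 1 : ℕ) * n.choose (r - 1) +
          #W ^ (#S + 1) * (homogConst s (r - 1) * n ^ (r - 2)) := mod_cast hmeet
    _ ≤ (#S - 1) * n.choose (r - 1) +
          (B * y ^ (r - 1)) ^ (#S + 1) * (homogConst s (r - 1) * n ^ (r - 2)) := by
        rw [Nat.cast_sub hS1, Nat.cast_one]
        gcongr
    _ = (#S - 1) * n.choose (r - 1) +
          B ^ (#S + 1) * homogConst s (r - 1) * ((y ^ (r - 1)) ^ (#S + 1) * n ^ (r - 2)) := by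
        ring
    _ ≤ _ := by gcongr

lemma card_le_mul_pow_div_sq (hr : 3 ≤ r) (hT : IsRTree r T) (hred : Reducible 2 T)
    (hTs : #(hverts T) ≤ s) (hs : 2 * r ≤ s) (hFr : ∀ E ∈ F, #E = r)
    (hFT : ¬ ContainsCopy F T) {y : ℝ} (hy : 0 < y) (hyn : y ^ 2 ≤ n)
    (hdeg_le : ∀ v, hdeg F v ≤ (n / y) ^ (r - 1)) :
    (#F : ℝ) ≤ homogConst s r * (1 + 2 * (r - 1 : ℕ) ^ 4) * (n ^ (r - 1) / y ^ 2) := by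
  have hpow : (n : ℝ) ^ (r - 2) ≤ n ^ (r - 1) / y ^ 2 := by
    rw [le_div_iff₀ (by positivity), show r - 1 = r - 2 + 1 by omega, pow_succ (n : ℝ)]
    gcongr
  calc (#F : ℝ)
      ≤ homogConst s r * (n ^ (r - 2) + 2 * (r - 1 : ℕ) ^ 4 * (n / y) ^ 2 * n ^ (r - 3)) :=
        card_le_of_hdeg_le hr hT hred hTs hs hFr hFT (by positivity) hdeg_le
    _ = homogConst s r * (n ^ (r - 2) + 2 * (r - 1 : ℕ) ^ 4 * (n ^ (r - 1) / y ^ 2)) := by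
        rw [show r - 1 = r - 3 + 2 by omega, pow_add (n : ℝ) (r - 3)]
        ring
    _ ≤ homogConst s r * (n ^ (r - 1) / y ^ 2 + 2 * (r - 1 : ℕ) ^ 4 * (n ^ (r - 1) / y ^ 2)) := by
        gcongr
    _ = _ := by ring

/-- The constant of the error term in the Turán bound for hypergraphs with a cross-cut of `σ`
vertices that embed in a `2`-reducible `r`-tree with at most `s` vertices. -/
def errorConst (s r σ : ℕ) : ℝ :=
  (r * homogConst s r) ^ (σ + 1) * homogConst s (r - 1) +
    homogConst s r * (1 + 2 * (r - 1 : ℕ) ^ 4)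

lemma errorConst_pos (s r σ : ℕ) : 0 < errorConst s r σ := by
  have : (0 : ℝ) < homogConst s r := mod_cast homogConst_pos s r
  rw [errorConst]
  positivity

/-- The vertices of degree above `(n / y) ^ (r - 1)` are few, which controls the edges meeting
them; the remaining edges form a family of bounded degree. -/
theorem card_le_add_mul_pow_div_sq (hr : 3 ≤ r) (hT : IsRTree r T) (hred : Reducible 2 T)
    (hTs : #(hverts T) ≤ s) (hs : 2 * r ≤ s) (hTH : ContainsCopy T H) (hS : IsCrossCut H S)
    (hS1 : 1 ≤ #S) (hFr : ∀ E ∈ F, #E = r) (hFH : ¬ ContainsCopy F H) {y : ℝ} (hy : 1 ≤ y)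
    (hyn : y ^ ((r - 1) * (#S + 1) + 2) ≤ n) :
    (#F : ℝ) ≤ (#S - 1) * n.choose (r - 1) + errorConst s r #S * (n ^ (r - 1) / y ^ 2) := by
  have hy0 : 0 < y := by linarith
  have hn : n ≠ 0 := by
    rintro rfl
    exact (pow_pos hy0 _).not_ge (by simpa using hyn)
  have hFT : ¬ ContainsCopy F T := fun h => hFH (h.trans hTH)
  have hcrude : (#F : ℝ) ≤ homogConst s r * n ^ (r - 1) := by
    exact_mod_cast Fintype.card_fin n ▸
      card_le_pow_sub_one (by omega) hT hred hTs hs hFr hFT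
  set W : Finset (Fin n) := {v | (n / y) ^ (r - 1) < hdeg F v}
  have hheavy := card_filter_not_disjoint_le_of_card_le (by omega) hT hred hTs hs hTH hS hS1 hFr
    hFH hy0 hyn (W := W) (card_filter_lt_hdeg_le hFr hn hcrude hy0)
  have hlight := card_le_mul_pow_div_sq (F := {E ∈ F | Disjoint E W}) hr hT hred hTs hs
    (fun E hE => hFr E (mem_filter.1 hE).1) (fun h => hFT (h.mono (filter_subset _ F))) hy0
    ((pow_le_pow_right₀ hy (Nat.le_add_left _ _)).trans hyn)
    (hdeg_filter_disjoint_le (by positivity) fun v hv => by simpa [W] using hv)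
  calc (#F : ℝ) = #{E ∈ F | ¬ Disjoint E W} + #{E ∈ F | Disjoint E W} := by
        rw [add_comm]
        exact_mod_cast (card_filter_add_card_filter_not _).symm
    _ ≤ _ := add_le_add hheavy hlight
    _ = _ := by
        rw [errorConst]
        ring

lemma exNum_le {b : ℝ} (hb : 0 ≤ b)
    (h : ∀ F : Finset (Finset (Fin n)), (∀ E ∈ F, #E = r) → ¬ ContainsCopy F H → #F ≤ b) :
    exNum n r H ≤ b := by
  refine (Nat.cast_le.2 (csSup_le' ?_)).trans (Nat.floor_le hb)
  rintro _ ⟨F, hFr, hFH, rfl⟩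
  exact Nat.le_floor (h F hFr hFH)

theorem exNum_le_mul_pow_sub_two (hr : 3 ≤ r) (hT : IsRTree r T) (hred : Reducible 2 T)
    (hTs : #(hverts T) ≤ s) (hs : 2 * r ≤ s) (hTH : ContainsCopy T H) (hS : IsCrossCut H S)
    (hS1 : #S = 1) (n : ℕ) : (exNum n r H : ℝ) ≤ homogConst s r * n ^ (r - 2) :=
  exNum_le (by positivity) fun F hFr hFH => by
    exact_mod_cast Fintype.card_fin n ▸
      card_le_pow_sub_two hr hT hred hTs hs hTH hS hS1 hFr hFH

theorem exNum_le_add_mul_rpow (hr : 3 ≤ r) (hT : IsRTree r T) (hred : Reducible 2 T)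
    (hTs : #(hverts T) ≤ s) (hs : 2 * r ≤ s) (hTH : ContainsCopy T H) (hS : IsCrossCut H S)
    (hS1 : 1 ≤ #S) {ε : ℝ} (hε : 0 ≤ ε) (hε' : ε * ((r - 1) * (#S + 1) + 2) ≤ 2) (n : ℕ) :
    (exNum n r H : ℝ) ≤ (#S - 1) * n.choose (r - 1) +
      errorConst s r #S * (n : ℝ) ^ ((r : ℝ) - 1 - ε) := by
  have hσ : (0 : ℝ) ≤ #S - 1 := sub_nonneg.2 (mod_cast hS1)
  have hconst := errorConst_pos s r #S
  refine exNum_le (by positivity) fun F hFr hFH => ?_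
  rcases Nat.eq_zero_or_pos n with rfl | hn
  · have hF := card_le_pow_sub_one (by omega) hT hred hTs hs hFr (hFH <| ·.trans hTH)
    rw [Fintype.card_fin, zero_pow (by omega), mul_zero, Nat.le_zero] at hF
    rw [hF, Nat.cast_zero]
    positivity
  have hn1 : (1 : ℝ) ≤ n := mod_cast hn
  have hn0 : (0 : ℝ) < n := by linarith
  have hyn : ((n : ℝ) ^ (ε / 2)) ^ ((r - 1) * (#S + 1) + 2) ≤ n := by
    rw [← Real.rpow_mul_natCast hn0.le]
    refine (Real.rpow_le_rpow_of_exponent_le hn1 ?_).trans_eq (Real.rpow_one _)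
    push_cast [Nat.cast_sub (show 1 ≤ r by omega)]
    linarith
  have hpow : (n : ℝ) ^ (r - 1) / ((n : ℝ) ^ (ε / 2)) ^ 2 = (n : ℝ) ^ ((r : ℝ) - 1 - ε) := by
    rw [← Real.rpow_mul_natCast hn0.le, ← Real.rpow_natCast, ← Real.rpow_sub hn0,
      Nat.cast_sub (by omega), Nat.cast_one, Nat.cast_ofNat, div_mul_cancel₀ _ two_ne_zero]
  rw [← hpow]
  exact card_le_add_mul_pow_div_sq hr hT hred hTs hs hTH hS hS1 hFr hFH
    (Real.one_le_rpow hn1 (by positivity)) hyn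

lemma exists_isCrossCut_card_eq_crossCutNum (h : ∃ S, IsCrossCut H S) :
    ∃ S, IsCrossCut H S ∧ #S = crossCutNum H :=
  let ⟨S, hS⟩ := h
  Nat.sInf_mem (s := {k | ∃ S, IsCrossCut H S ∧ #S = k}) ⟨#S, S, hS, rfl⟩

lemma one_div_mul_le_two {a b : ℝ} (ha : 3 ≤ a) (hb : 0 ≤ b) :
    1 / ((a - 2) * (b + 1) + 1) * ((a - 1) * (b + 1) + 2) ≤ 2 := by
  have hpos : 0 < (a - 2) * (b + 1) + 1 := by nlinarith
  rw [one_div_mul_eq_div, div_le_iff₀ hpos]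
  nlinarith

theorem exNum_upper_asymptotic_general {σ : ℕ} (hr : 3 ≤ r)
    (hemb : ∃ T : Finset (Finset γ), IsRTree r T ∧ Reducible 2 T ∧ ContainsCopy T H)
    (hcc : ∃ S, IsCrossCut H S ∧ #S = σ) :
    (1 ≤ σ → ∃ C : ℝ, 0 < C ∧ ∀ ε : ℝ, 0 ≤ ε → ε * ((r - 1) * (σ + 1) + 2) ≤ 2 → ∀ n : ℕ,
      (exNum n r H : ℝ) ≤ ((σ : ℝ) - 1) * n.choose (r - 1) +
        C * (n : ℝ) ^ ((r : ℝ) - 1 - ε)) ∧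
    (σ = 1 → ∃ C : ℝ, 0 < C ∧ ∀ n : ℕ, (exNum n r H : ℝ) ≤ C * (n : ℝ) ^ (r - 2)) := by
  obtain ⟨T, hT, hred, hTH⟩ := hemb
  obtain ⟨S, hS, rfl⟩ := hcc
  have hTs : #(hverts T) ≤ #(hverts T) + 2 * r := Nat.le_add_right _ _
  have hs : 2 * r ≤ #(hverts T) + 2 * r := Nat.le_add_left _ _
  refine ⟨fun hS1 => ⟨errorConst (#(hverts T) + 2 * r) r #S, errorConst_pos _ _ _, fun ε hε hε' =>
    exNum_le_add_mul_rpow hr hT hred hTs hs hTH hS hS1 hε hε'⟩, fun hS1 =>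
    ⟨homogConst (#(hverts T) + 2 * r) r, mod_cast homogConst_pos _ r,
      exNum_le_mul_pow_sub_two hr hT hred hTs hs hTH hS hS1⟩⟩

end Turan

/-- Asymptotic upper bound (Theorem: Asymptotic). If `r ≥ 4` and `H` is embeddable in a
`2`-reducible `r`-tree with cross-cut number `σ`, then with `β = 1/((r-2)(σ+1)+1)`:
for `σ ≥ 2`, `ex(n,H) ≤ (σ-1)·C(n,r-1) + C·n^(r-1-β)`, and for `σ = 1`,
`ex(n,H) ≤ C·n^(r-2)`, for a constant `C` depending only on `H` and `r`. -/
theorem exNum_upper_asymptotic {α : Type*} [DecidableEq α]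
    (r σ : ℕ) (hr : 4 ≤ r)
    (H : Finset (Finset α)) (hH : ∀ E ∈ H, E.card = r)
    (hemb : ∃ T : Finset (Finset ℕ), IsRTree r T ∧ Reducible 2 T ∧ ContainsCopy T H)
    (hcc : ∃ S : Finset α, IsCrossCut H S)
    (hσ : crossCutNum H = σ) :
    (2 ≤ σ → ∃ C : ℝ, 0 < C ∧ ∀ n : ℕ,
      (exNum n r H : ℝ) ≤ ((σ : ℝ) - 1) * (Nat.choose n (r - 1)) +
        C * (n : ℝ) ^ ((r : ℝ) - 1 - 1 / (((r : ℝ) - 2) * ((σ : ℝ) + 1) + 1))) ∧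
    (σ = 1 → ∃ C : ℝ, 0 < C ∧ ∀ n : ℕ,
      (exNum n r H : ℝ) ≤ C * (n : ℝ) ^ (r - 2 : ℕ)) := by
  have hr' : (3 : ℝ) ≤ r := mod_cast (by omega : 3 ≤ r)
  have hgen := exNum_upper_asymptotic_general (by omega) hemb
    (hσ ▸ exists_isCrossCut_card_eq_crossCutNum hcc)
  refine ⟨fun h2 => ?_, hgen.2⟩
  obtain ⟨C, hC, hbound⟩ := hgen.1 (by omega)
  exact ⟨C, hC, hbound _ (one_div_nonneg.2 (by nlinarith)) (one_div_mul_le_two hr' σ.cast_nonneg)⟩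

end
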